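/- Let s ∈ B_3^3 be an irreducible braid system of degree 3 and length 3 whose Hurwitz orbit s·B_3 is finite. Then #(s·B_3) ≤ 162. -/

import Mathlib

open FreeGroup in
/-- The braid relations on `m` strands (generators indexed 0-based by `Fin (m-1)`). -/
def braidRels (m : ℕ) : Set (FreeGroup (Fin (m - 1))) :=
  {r | ∃ i j : Fin (m - 1), (i.val + 2 ≤ j.val ∨ j.val + 2 ≤ i.val) ∧
        r = of i * of j * (of j * of i)⁻¹} ∪
  {r | ∃ i j : Fin (m - 1), (i.val + 1 = j.val ∨ j.val + 1 = i.val) ∧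
        r = of i * of j * of i * (of j * of i * of j)⁻¹}

/-- The braid group on `m` strands. -/
abbrev BraidGroup (m : ℕ) := PresentedGroup (braidRels m)

/-- The Artin generator `σ_i` (1-based index `1 ≤ i ≤ m-1`); junk value `1` out of range. -/
def braidGen (m : ℕ) (i : ℕ) : BraidGroup m :=
  if h : 1 ≤ i ∧ i ≤ m - 1 then PresentedGroup.of ⟨i - 1, by omega⟩ else 1

/-- A braid is periodic if some positive power of it is central. -/
def IsPeriodic {m : ℕ} (β : BraidGroup m) : Prop :=
  ∃ k : ℕ, 1 ≤ k ∧ β ^ k ∈ Subgroup.center (BraidGroup m)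

/-- The elementary Hurwitz move at (0-based) position `i`, as a bijection on `n`-tuples. -/
def hEquiv {G : Type*} [Group G] {n : ℕ} (i : Fin (n - 1)) : Equiv.Perm (Fin n → G) where
  toFun s := fun k =>
    if k.val = i.val then s ⟨i.val + 1, by have := i.isLt; omega⟩
    else if k.val = i.val + 1 then
      (s ⟨i.val + 1, by have := i.isLt; omega⟩)⁻¹ * s ⟨i.val, by have := i.isLt; omega⟩ *
        s ⟨i.val + 1, by have := i.isLt; omega⟩
    else s k
  invFun t := fun k =>
    if k.val = i.val then
      t ⟨i.val, by have := i.isLt; omega⟩ * t ⟨i.val + 1, by have := i.isLt; omega⟩ *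
        (t ⟨i.val, by have := i.isLt; omega⟩)⁻¹
    else if k.val = i.val + 1 then t ⟨i.val, by have := i.isLt; omega⟩
    else t k
  left_inv s := by
    funext k
    have hlt := i.isLt
    rcases k with ⟨kv, hkv⟩
    by_cases h1 : kv = i.val
    · subst h1
      simp [mul_assoc]
    · by_cases h2 : kv = i.val + 1
      · subst h2
        simp
      · simp [h1, h2]
  right_inv t := by
    funext k
    have hlt := i.isLt
    rcases k with ⟨kv, hkv⟩
    by_cases h1 : kv = i.val
    · subst h1
      simp [mul_assoc]
    · by_cases h2 : kv = i.val + 1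
      · subst h2
        simp [mul_assoc]
      · simp [h1, h2]

/-- The (right) Hurwitz action of a word in the generators `σ_1, …, σ_{n-1}` of `B_n`
on `n`-tuples of elements of a group `G`: `hurwitzAct (w₁ * w₂) s = hurwitzAct w₂ (hurwitzAct w₁ s)`. -/
def hurwitzAct {G : Type*} [Group G] {n : ℕ} (w : FreeGroup (Fin (n - 1))) (s : Fin n → G) :
    Fin n → G :=
  (MulOpposite.unop (FreeGroup.lift (fun i => MulOpposite.op (hEquiv (G := G) (n := n) i)) w)) s

/-- The Hurwitz orbit of a braid system. -/
def hurwitzOrbit {G : Type*} [Group G] {n : ℕ} (s : Fin n → G) : Set (Fin n → G) :=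
  {t | ∃ w : FreeGroup (Fin (n - 1)), hurwitzAct w s = t}

/-- The generator `σ_i` (1-based) as a word acting on length-`n` systems. -/
def genWord (n : ℕ) (i : ℕ) : FreeGroup (Fin (n - 1)) :=
  if h : 1 ≤ i ∧ i ≤ n - 1 then FreeGroup.of ⟨i - 1, by omega⟩ else 1

/-- The pure braid word `c_i = (σ_1⁻¹ ⋯ σ_{i-1}⁻¹) σ_i² (σ_{i-1} ⋯ σ_1)`. -/
def cWord (n : ℕ) (i : ℕ) : FreeGroup (Fin (n - 1)) :=
  ((List.range (i - 1)).map (fun t => (genWord n (t + 1))⁻¹)).prod *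
    genWord n i ^ 2 *
    ((List.range (i - 1)).reverse.map (fun t => genWord n (t + 1))).prod

/-- The word `Δ_{(i,j)} = (σ_i σ_{i+1} ⋯ σ_j)(σ_i ⋯ σ_{j-1}) ⋯ (σ_i σ_{i+1})(σ_i)`. -/
def deltaWord (n i j : ℕ) : FreeGroup (Fin (n - 1)) :=
  ((List.range (j - i + 1)).map (fun t =>
    ((List.range (j - t - i + 1)).map (fun u => genWord n (i + u))).prod)).prod

/-- The exponent-sum homomorphism, valued in `Multiplicative ℤ`. -/
def expSumHom {m : ℕ} : BraidGroup m →* Multiplicative ℤ :=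
  PresentedGroup.toGroup (f := fun _ => Multiplicative.ofAdd 1) (by
    rintro r (⟨i, j, -, rfl⟩ | ⟨i, j, -, rfl⟩) <;>
      simp <;> group)

/-- The exponent sum of a braid: `e(σ_i) = 1`. -/
def esum {m : ℕ} (β : BraidGroup m) : ℤ := Multiplicative.toAdd (expSumHom β)

/-- A braid system is reducible if some non-trivial partition of the index set has all
entries from the two parts commuting. -/
def IsReducible {G : Type*} [Group G] {n : ℕ} (s : Fin n → G) : Prop :=
  ∃ I : Set (Fin n), I.Nonempty ∧ Iᶜ.Nonempty ∧ ∀ i ∈ I, ∀ j ∈ Iᶜ, Commute (s i) (s j)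

/-! ## Part 1: matrices in `SL(2, ℤ)` -/

namespace HB

open scoped Matrix

/-- Shorthand for the target group. -/
abbrev SL := Matrix.SpecialLinearGroup (Fin 2) ℤ

/-- Trace. -/
def tr (X : SL) : ℤ := X.1 0 0 + X.1 1 1

/-- Being a scalar matrix. -/
def Scal (X : SL) : Prop := X.1 0 1 = 0 ∧ X.1 1 0 = 0 ∧ X.1 0 0 = X.1 1 1

/-- The Fricke polynomial of a pair. -/
def Fr (p q x : ℤ) : ℤ := p ^ 2 + q ^ 2 + x ^ 2 - p * q * x

lemma det_eq (X : SL) : X.1 0 0 * X.1 1 1 - X.1 0 1 * X.1 1 0 = 1 := by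
  have := X.2; rwa [Matrix.det_fin_two] at this

lemma mul00 (X Y : SL) : (X * Y).1 0 0 = X.1 0 0 * Y.1 0 0 + X.1 0 1 * Y.1 1 0 := by
  simp [Matrix.mul_apply, Fin.sum_univ_two]
lemma mul01 (X Y : SL) : (X * Y).1 0 1 = X.1 0 0 * Y.1 0 1 + X.1 0 1 * Y.1 1 1 := by
  simp [Matrix.mul_apply, Fin.sum_univ_two]
lemma mul10 (X Y : SL) : (X * Y).1 1 0 = X.1 1 0 * Y.1 0 0 + X.1 1 1 * Y.1 1 0 := by
  simp [Matrix.mul_apply, Fin.sum_univ_two]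
lemma mul11 (X Y : SL) : (X * Y).1 1 1 = X.1 1 0 * Y.1 0 1 + X.1 1 1 * Y.1 1 1 := by
  simp [Matrix.mul_apply, Fin.sum_univ_two]
lemma inv00 (X : SL) : (X⁻¹).1 0 0 = X.1 1 1 := by
  simp [Matrix.SpecialLinearGroup.coe_inv, Matrix.adjugate_fin_two]
lemma inv01 (X : SL) : (X⁻¹).1 0 1 = - X.1 0 1 := by
  simp [Matrix.SpecialLinearGroup.coe_inv, Matrix.adjugate_fin_two]
lemma inv10 (X : SL) : (X⁻¹).1 1 0 = - X.1 1 0 := by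
  simp [Matrix.SpecialLinearGroup.coe_inv, Matrix.adjugate_fin_two]
lemma inv11 (X : SL) : (X⁻¹).1 1 1 = X.1 0 0 := by
  simp [Matrix.SpecialLinearGroup.coe_inv, Matrix.adjugate_fin_two]

lemma sl_ext {X Y : SL} (h00 : X.1 0 0 = Y.1 0 0) (h01 : X.1 0 1 = Y.1 0 1)
    (h10 : X.1 1 0 = Y.1 1 0) (h11 : X.1 1 1 = Y.1 1 1) : X = Y := by
  apply Subtype.ext
  ext i j
  fin_cases i <;> fin_cases j <;> assumption

lemma tr_mul_comm (X Y : SL) : tr (X * Y) = tr (Y * X) := by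
  simp only [tr, mul00, mul11]; ring

lemma tr_inv (X : SL) : tr X⁻¹ = tr X := by
  simp only [tr, inv00, inv11]; ring

lemma tr_one : tr 1 = 2 := by simp [tr]

lemma tr_mul_inv (X Y : SL) : tr (X * Y⁻¹) = tr X * tr Y - tr (X * Y) := by
  simp only [tr, mul00, mul11, inv00, inv01, inv10, inv11]; ring

lemma tr_conj (X Y : SL) : tr (Y⁻¹ * X * Y) = tr X := by
  rw [tr_mul_comm, ← mul_assoc, mul_inv_cancel, one_mul]

lemma tr_conj' (X Y : SL) : tr (Y * X * Y⁻¹) = tr X := by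
  rw [tr_mul_comm, ← mul_assoc, inv_mul_cancel, one_mul]

lemma scal_one_or {X : SL} (h : Scal X) : X = 1 ∨ X = -1 := by
  obtain ⟨h1, h2, h3⟩ := h
  have hd := det_eq X
  rw [h1, h2, h3] at hd
  have h5 : X.1 1 1 = 1 ∨ X.1 1 1 = -1 := by
    have : (X.1 1 1 - 1) * (X.1 1 1 + 1) = 0 := by linarith
    rcases mul_eq_zero.1 this with h | h
    · left; linarith
    · right; linarith
  rcases h5 with h5 | h5
  · left; apply sl_ext <;> simp [h1, h2, h3, h5]
  · right; apply sl_ext <;> simp [h1, h2, h3, h5]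

/-- Commuting in terms of entries. -/
lemma comm_iff (X Y : SL) : X * Y = Y * X ↔
    (X.1 0 1 * Y.1 1 0 = Y.1 0 1 * X.1 1 0 ∧
     X.1 0 1 * (Y.1 0 0 - Y.1 1 1) = Y.1 0 1 * (X.1 0 0 - X.1 1 1) ∧
     X.1 1 0 * (Y.1 0 0 - Y.1 1 1) = Y.1 1 0 * (X.1 0 0 - X.1 1 1)) := by
  constructor
  · intro h
    have h00 := congrArg (fun Z : SL => Z.1 0 0) h
    have h01 := congrArg (fun Z : SL => Z.1 0 1) h
    have h10 := congrArg (fun Z : SL => Z.1 1 0) h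
    simp only [mul00, mul01, mul10] at h00 h01 h10
    refine ⟨by linarith, by linarith, by linarith⟩
  · rintro ⟨h1, h2, h3⟩
    apply sl_ext <;> simp only [mul00, mul01, mul10, mul11] <;> linarith

lemma scal_comm {X : SL} (h : Scal X) (Y : SL) : X * Y = Y * X := by
  rw [comm_iff]; obtain ⟨h1, h2, h3⟩ := h
  simp [h1, h2, h3]

/-- Commutation is transitive through a non-scalar matrix. -/
lemma comm_trans {X Y Z : SL} (hX : ¬ Scal X) (hY : X * Y = Y * X) (hZ : X * Z = Z * X) :
    Y * Z = Z * Y := by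
  rw [comm_iff] at *
  obtain ⟨a1, a2, a3⟩ := hY
  obtain ⟨b1, b2, b3⟩ := hZ
  unfold Scal at hX
  set x := X.1 0 0 - X.1 1 1
  set y := Y.1 0 0 - Y.1 1 1
  set z := Z.1 0 0 - Z.1 1 1
  by_cases hb : X.1 0 1 = 0
  · by_cases hc : X.1 1 0 = 0
    · have hx : x ≠ 0 := fun h => hX ⟨hb, hc, by simp only [x] at h; linarith⟩
      rw [hb] at a2 b2; rw [hc] at a3 b3
      have e1 : Y.1 0 1 = 0 := by simpa [hx] using a2.symm
      have e2 : Y.1 1 0 = 0 := by simpa [hx] using a3.symm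
      have e3 : Z.1 0 1 = 0 := by simpa [hx] using b2.symm
      have e4 : Z.1 1 0 = 0 := by simpa [hx] using b3.symm
      simp [e1, e2, e3, e4]
    · refine ⟨?_, ?_, ?_⟩ <;> apply mul_left_cancel₀ hc
      · linear_combination (- Z.1 1 0) * a1 + Y.1 1 0 * b1
      · rw [hb] at a1 b1
        have e1 : Y.1 0 1 = 0 := by simpa [hc] using a1.symm
        have e3 : Z.1 0 1 = 0 := by simpa [hc] using b1.symm
        simp [e1, e3]
      · linear_combination (Y.1 1 0) * b3 - Z.1 1 0 * a3
  · have g1 : Y.1 0 1 * Z.1 1 0 = Z.1 0 1 * Y.1 1 0 := by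
      apply mul_left_cancel₀ hb
      linear_combination (Y.1 0 1) * b1 - Z.1 0 1 * a1
    refine ⟨g1, ?_, ?_⟩ <;> apply mul_left_cancel₀ hb
    · linear_combination (Y.1 0 1) * b2 - Z.1 0 1 * a2
    · linear_combination z * a1 - y * b1 + Y.1 0 1 * b3 - Z.1 0 1 * a3 + x * g1

/-- Definiteness: traceless matrices orthogonal to an elliptic one. -/
lemma definite (E : SL) (hE : |tr E| ≤ 1) (m1 m2 m3 : ℤ)
    (h : (E.1 0 0 - E.1 1 1) * m1 + E.1 1 0 * m2 + E.1 0 1 * m3 = 0) :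
    0 ≤ m1 ^ 2 + m2 * m3 ∧ (m1 ^ 2 + m2 * m3 = 0 → m1 = 0 ∧ m2 = 0 ∧ m3 = 0) := by
  have hd := det_eq E
  rw [abs_le] at hE
  unfold tr at hE
  set a := E.1 0 0
  set b := E.1 0 1
  set c := E.1 1 0
  set d := E.1 1 1
  have hdisc : (a - d) ^ 2 + 4 * (b * c) ≤ -3 := by nlinarith
  have hbc : b * c < 0 := by nlinarith [sq_nonneg (a - d)]
  have hc : c ≠ 0 := by rintro h0; rw [h0] at hbc; simp at hbc
  have hc2 : 0 < c ^ 2 := by positivity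
  have key : 4 * c ^ 2 * (m1 ^ 2 + m2 * m3) =
      (2 * c * m1 - (a - d) * m3) ^ 2 + (-((a - d) ^ 2 + 4 * (b * c))) * m3 ^ 2 := by
    linear_combination (4 * c * m3) * h
  have hm3 : 3 * m3 ^ 2 ≤ (-((a - d) ^ 2 + 4 * (b * c))) * m3 ^ 2 := by
    nlinarith [sq_nonneg m3]
  constructor
  · by_contra hneg
    push Not at hneg
    nlinarith [sq_nonneg (2 * c * m1 - (a - d) * m3), sq_nonneg m3]
  · intro h0
    rw [h0, mul_zero] at key
    have k3 : m3 = 0 := by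
      have : m3 ^ 2 = 0 := by
        nlinarith [sq_nonneg (2 * c * m1 - (a - d) * m3), sq_nonneg m3]
      exact pow_eq_zero_iff (two_ne_zero) |>.1 this
    have k1 : m1 = 0 := by
      rw [k3] at h0
      have : m1 ^ 2 = 0 := by linarith
      exact pow_eq_zero_iff (two_ne_zero) |>.1 this
    rw [k1, k3] at h
    have : c * m2 = 0 := by linarith
    exact ⟨k1, (mul_eq_zero.1 this).resolve_left hc, k3⟩

lemma fr_gt_aux (E X : SL) (hE : |tr E| ≤ 1) (hne : E * X ≠ X * E) :
    4 < Fr (tr E) (tr X) (tr (E * X)) := by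
  rw [Ne, comm_iff] at hne
  have hd := det_eq E
  have hd' := det_eq X
  have := definite E hE (E.1 0 1 * X.1 1 0 - X.1 0 1 * E.1 1 0)
    ((E.1 0 0 - E.1 1 1) * X.1 0 1 - E.1 0 1 * (X.1 0 0 - X.1 1 1))
    (E.1 1 0 * (X.1 0 0 - X.1 1 1) - X.1 1 0 * (E.1 0 0 - E.1 1 1)) (by ring)
  obtain ⟨h1, h2⟩ := this
  have hF : Fr (tr E) (tr X) (tr (E * X)) - 4 =
     (E.1 0 1 * X.1 1 0 - X.1 0 1 * E.1 1 0) ^ 2 +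
    ((E.1 0 0 - E.1 1 1) * X.1 0 1 - E.1 0 1 * (X.1 0 0 - X.1 1 1)) *
    (E.1 1 0 * (X.1 0 0 - X.1 1 1) - X.1 1 0 * (E.1 0 0 - E.1 1 1)) := by
    unfold Fr
    simp only [tr, mul00, mul11]
    linear_combination (4 - (X.1 0 0 + X.1 1 1) ^ 2) * hd +
      (4 * (E.1 0 0 * E.1 1 1 - E.1 0 1 * E.1 1 0) - (E.1 0 0 + E.1 1 1) ^ 2) * hd'
  rcases h1.lt_or_eq with h | h
  · linarith
  · exfalso; apply hne
    obtain ⟨k1, k2, k3⟩ := h2 h.symm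
    refine ⟨by linarith, by linarith, by linarith⟩

/-- Non-commuting matrices with elliptic product. -/
lemma fr_gt (A B : SL) (hE : |tr (A * B)| ≤ 1) (hne : A * B ≠ B * A) :
    4 < Fr (tr A) (tr B) (tr (A * B)) := by
  have := fr_gt_aux (A * B) A⁻¹ hE (by
    intro h
    apply hne
    have h2 := congrArg (fun Z => Z * A) h
    simp only [inv_mul_cancel_right, inv_mul_cancel_left] at h2
    exact h2)
  rw [tr_inv, tr_conj'] at this
  unfold Fr at *
  linarith

lemma fr_eq (A B : SL) (h : A * B = B * A) : Fr (tr A) (tr B) (tr (A * B)) = 4 := by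
  rw [comm_iff] at h
  obtain ⟨h1, h2, h3⟩ := h
  have hd := det_eq A
  have hd' := det_eq B
  have hF : Fr (tr A) (tr B) (tr (A * B)) - 4 =
     (A.1 0 1 * B.1 1 0 - B.1 0 1 * A.1 1 0) ^ 2 +
    ((A.1 0 0 - A.1 1 1) * B.1 0 1 - A.1 0 1 * (B.1 0 0 - B.1 1 1)) *
    (A.1 1 0 * (B.1 0 0 - B.1 1 1) - B.1 1 0 * (A.1 0 0 - A.1 1 1)) := by
    unfold Fr
    simp only [tr, mul00, mul11]
    linear_combination (4 - (B.1 0 0 + B.1 1 1) ^ 2) * hd +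
      (4 * (A.1 0 0 * A.1 1 1 - A.1 0 1 * A.1 1 0) - (A.1 0 0 + A.1 1 1) ^ 2) * hd'
  rw [h1, h2, h3] at hF
  linarith

lemma par_aux (A B : SL) (hA : ¬ Scal A) (h : A * B = B * A) (hp : tr A ^ 2 = 4) :
    tr B ^ 2 = 4 := by
  rw [comm_iff] at h
  obtain ⟨h1, h2, h3⟩ := h
  have hd := det_eq A
  have hd' := det_eq B
  unfold tr at *
  have e1 : (A.1 0 0 - A.1 1 1) ^ 2 + 4 * (A.1 0 1 * A.1 1 0) = 0 := by nlinarith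
  suffices (B.1 0 0 - B.1 1 1) ^ 2 + 4 * (B.1 0 1 * B.1 1 0) = 0 by nlinarith
  set x := A.1 0 0 - A.1 1 1 with hx
  set y := B.1 0 0 - B.1 1 1
  by_cases hb : A.1 0 1 = 0
  · by_cases hc : A.1 1 0 = 0
    · exfalso
      apply hA
      refine ⟨hb, hc, ?_⟩
      rw [hb, zero_mul, mul_zero, add_zero] at e1
      have := pow_eq_zero_iff (two_ne_zero) |>.1 e1
      linarith
    · apply mul_left_cancel₀ (pow_ne_zero 2 hc)
      linear_combination (A.1 1 0 * y + B.1 1 0 * x) * h3 - 4 * A.1 1 0 * B.1 1 0 * h1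
        + B.1 1 0 ^ 2 * e1
  · apply mul_left_cancel₀ (pow_ne_zero 2 hb)
    linear_combination (A.1 0 1 * y + B.1 0 1 * x) * h2 + 4 * A.1 0 1 * B.1 0 1 * h1
        + B.1 0 1 ^ 2 * e1

lemma par_iff (A B : SL) (hA : ¬ Scal A) (hB : ¬ Scal B) (h : A * B = B * A) :
    tr A ^ 2 = 4 ↔ tr B ^ 2 = 4 :=
  ⟨par_aux A B hA h, par_aux B A hB h.symm⟩

/-! Trace identities for triples. -/

lemma tr_x' (A B C : SL) : tr (A * (C⁻¹ * B * C)) =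
    tr A * tr B + tr C * tr (A * B * C) - tr (B * C) * tr (A * C) - tr (A * B) := by
  have e1 : tr (A * (C⁻¹ * B * C)) = tr ((B * C * A) * C⁻¹) := by
    rw [show A * (C⁻¹ * B * C) = (A * C⁻¹) * (B * C) by group, tr_mul_comm,
      show B * C * (A * C⁻¹) = B * C * A * C⁻¹ by group]
  have e2 : tr (B * C * A) = tr (A * B * C) := by
    rw [tr_mul_comm, ← mul_assoc]
  have e3 : tr (B * C * A * C) = tr (B * C) * tr (A * C) - tr (B * A⁻¹) := by
    have := tr_mul_inv (B * C) (A * C)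
    rw [show B * C * (A * C)⁻¹ = B * A⁻¹ by group, ← mul_assoc] at this
    linarith
  rw [e1, tr_mul_inv, e2, e3, tr_mul_inv, tr_mul_comm B A]; ring

lemma tr_y' (A B C : SL) : tr (A * B * A⁻¹ * C) =
    tr B * tr C + tr A * tr (A * B * C) - tr (A * B) * tr (A * C) - tr (B * C) := by
  have := tr_x' B C A
  rw [show A * B * A⁻¹ * C = A * (B * A⁻¹ * C) by group, tr_mul_comm,
    show B * A⁻¹ * C * A = B * (A⁻¹ * C * A) by group, this, tr_mul_comm B A,
    tr_mul_comm C A, tr_mul_comm (B * C) A, ← mul_assoc]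
  ring

lemma tr_z' (A B C : SL) : tr (B⁻¹ * A * B * C) =
    tr A * tr C + tr B * tr (A * B * C) - tr (A * B) * tr (B * C) - tr (A * C) := by
  have := tr_x' C A B
  rw [tr_mul_comm, this, tr_mul_comm C B, tr_mul_comm C A,
    show C * A * B = C * (A * B) by group, tr_mul_comm C (A * B)]
  ring

lemma tr_sum (A B C : SL) : tr (A * B * C) + tr (A * C * B) =
    tr A * tr (B * C) + tr B * tr (A * C) + tr C * tr (A * B) - tr A * tr B * tr C := by
  have e1 := tr_mul_inv (A * B) C
  have e2 := tr_mul_inv A (C * B⁻¹)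
  have e3 := tr_mul_inv (A * C) B
  have e4 := tr_mul_inv C B
  rw [show A * (C * B⁻¹)⁻¹ = A * B * C⁻¹ by group] at e2
  rw [← mul_assoc] at e2
  rw [tr_mul_comm C B] at e4
  rw [e4] at e2
  linarith

lemma tr_fricke (A B C : SL) :
    tr (A * B) * tr (B * C) * tr (A * C) + tr (A * B) ^ 2 + tr (B * C) ^ 2 + tr (A * C) ^ 2
    - (tr A * tr B + tr C * tr (A * B * C)) * tr (A * B)
    - (tr B * tr C + tr A * tr (A * B * C)) * tr (B * C)
    - (tr A * tr C + tr B * tr (A * B * C)) * tr (A * C)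
    + tr A ^ 2 + tr B ^ 2 + tr C ^ 2 + tr (A * B * C) ^ 2
    + tr A * tr B * tr C * tr (A * B * C) = 4 := by
  have hs := tr_sum A B C
  -- product of the two triple traces
  have e1 := tr_mul_inv (A * B * C) (A * C * B)
  have comm2 : ∀ X Y : SL, tr (X * Y * X⁻¹ * Y⁻¹) =
      tr X ^ 2 + tr Y ^ 2 + tr (X * Y) ^ 2 - tr X * tr Y * tr (X * Y) - 2 := by
    intro X Y
    have a1 := tr_mul_inv (X * Y * X⁻¹) Y
    have a2 := tr_mul_inv (X * Y) (Y⁻¹ * X)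
    rw [show X * Y * (Y⁻¹ * X)⁻¹ = X * Y * X⁻¹ * Y by group,
      show X * Y * (Y⁻¹ * X) = X * X by group, tr_mul_comm Y⁻¹ X, tr_mul_inv X Y] at a2
    have a3 := tr_mul_inv X X
    rw [mul_inv_cancel, tr_one] at a3
    rw [tr_conj'] at a1
    rw [a1, a2]; linear_combination a3
  have e2 : tr (A * B * C * (A * C * B)⁻¹) = tr (B * C * B⁻¹ * C⁻¹) := by
    rw [show A * B * C * (A * C * B)⁻¹ = A * (B * C * B⁻¹ * C⁻¹) * A⁻¹ by group, tr_conj']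
  rw [e2, comm2] at e1
  have e3 : tr (A * B * C * (A * C * B)) = tr (B * A * B * C * (A * C)) := by
    rw [show A * B * C * (A * C * B) = (A * B * C * (A * C)) * B by group, tr_mul_comm]
    congr 1
    group
  have e4 := tr_mul_inv (B * A * B * C) (A * C)
  rw [show B * A * B * C * (A * C)⁻¹ = B * A * B * A⁻¹ by group] at e4
  have e5 := tr_mul_inv (B * A) (C⁻¹ * B⁻¹)
  rw [show B * A * (C⁻¹ * B⁻¹)⁻¹ = B * A * B * C by group,
    show B * A * (C⁻¹ * B⁻¹) = B * (A * C⁻¹) * B⁻¹ by group, tr_conj',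
    show C⁻¹ * B⁻¹ = (B * C)⁻¹ by group, tr_inv, tr_mul_inv, tr_mul_comm B A] at e5
  have e6 := tr_mul_inv (B * A * B) A
  have e7 := tr_mul_inv (B * A) B
  rw [tr_conj', tr_mul_comm B A] at e7
  have e8 := tr_mul_inv (B * A) (B * A)
  rw [mul_inv_cancel, tr_one, tr_mul_comm B A, ← mul_assoc] at e8
  generalize tr (A * B * C) = t at *
  generalize tr (A * C * B) = t' at *
  have ht' : t' = tr A * tr (B * C) + tr B * tr (A * C) + tr C * tr (A * B) - tr A * tr B * tr C - t := by linarith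
  subst ht'
  rw [e5, e6] at e4
  rw [e3] at e1
  linear_combination e1 - e4 + tr A * e7 - e8
end HB
/-! ## Part 2: the representation `B_3 → SL(2, ℤ)` and its kernel -/

namespace HB

open scoped Matrix

/-- Image of the first generator. -/
def M1 : SL := ⟨!![1, 1; 0, 1], by simp [Matrix.det_fin_two]⟩
/-- Image of the second generator. -/
def M2 : SL := ⟨!![1, 0; -1, 1], by simp [Matrix.det_fin_two]⟩

lemma M_braid : M1 * M2 * M1 = M2 * M1 * M2 := by
  apply sl_ext <;> simp only [mul00, mul01, mul10, mul11] <;> simp [M1, M2]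

/-- The images of the generators. -/
def gensM : Fin (3 - 1) → SL := fun i => if i.val = 0 then M1 else M2

/-- The standard representation. -/
def phi : BraidGroup 3 →* SL :=
  PresentedGroup.toGroup (f := gensM) (by
    rintro r (⟨i, j, h, rfl⟩ | ⟨i, j, h, rfl⟩)
    · exfalso
      have := i.isLt; have := j.isLt
      omega
    · have hi := i.isLt
      have hj := j.isLt
      rcases h with h | h
      · have h1 : i.val = 0 := by omega
        have h2 : j.val = 1 := by omega
        simp only [map_mul, map_inv, FreeGroup.lift_apply_of, gensM, h1, h2, if_true,
          one_ne_zero, if_false]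
        rw [M_braid, mul_inv_cancel]
      · have h1 : i.val = 1 := by omega
        have h2 : j.val = 0 := by omega
        simp only [map_mul, map_inv, FreeGroup.lift_apply_of, gensM, h1, h2, if_true,
          one_ne_zero, if_false]
        rw [M_braid, mul_inv_cancel])

/-- First generator. -/
def ga : BraidGroup 3 := PresentedGroup.of ⟨0, by decide⟩
/-- Second generator. -/
def gb : BraidGroup 3 := PresentedGroup.of ⟨1, by decide⟩
/-- Half twist. -/
def gD : BraidGroup 3 := ga * gb * ga

lemma phi_ga : phi ga = M1 := by
  simp [phi, ga, gensM]
lemma phi_gb : phi gb = M2 := by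
  simp [phi, gb, gensM]

lemma exp_ga : expSumHom ga = Multiplicative.ofAdd 1 := by
  simp [expSumHom, ga]
lemma exp_gb : expSumHom gb = Multiplicative.ofAdd 1 := by
  simp [expSumHom, gb]

lemma g_braid : ga * gb * ga = gb * ga * gb := by
  have : (PresentedGroup.mk (braidRels 3) (FreeGroup.of ⟨0, by decide⟩ * FreeGroup.of ⟨1, by decide⟩ *
      FreeGroup.of ⟨0, by decide⟩ * (FreeGroup.of ⟨1, by decide⟩ * FreeGroup.of ⟨0, by decide⟩ *
      FreeGroup.of ⟨1, by decide⟩)⁻¹)) = 1 := by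
    apply PresentedGroup.one_of_mem
    right
    exact ⟨⟨0, by decide⟩, ⟨1, by decide⟩, by simp, rfl⟩
  rw [map_mul, map_inv, mul_inv_eq_one] at this
  simp only [map_mul] at this
  exact this

lemma ga_gD : ga * gD = gD * gb := by
  unfold gD
  calc ga * (ga * gb * ga) = ga * (gb * ga * gb) := by rw [g_braid]
    _ = _ := by group
lemma gb_gD : gb * gD = gD * ga := by
  unfold gD
  calc gb * (ga * gb * ga) = (gb * ga * gb) * ga := by group
    _ = _ := by rw [← g_braid]

lemma ga_gD2 : Commute ga (gD ^ 2) := by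
  unfold Commute SemiconjBy
  rw [pow_two, ← mul_assoc, ga_gD, mul_assoc, gb_gD, ← mul_assoc]

/-- The word in `a` and `b⁻¹` given by a list of booleans. -/
def wd (l : List Bool) : BraidGroup 3 := (l.map (fun c => if c then ga else gb⁻¹)).prod

/-- Having a normal form. -/
def NF (x : BraidGroup 3) : Prop := ∃ (m f : ℤ) (l : List Bool), x = gD ^ m * wd l * gD ^ f

lemma NF_D (k : ℤ) {x : BraidGroup 3} (h : NF x) : NF (gD ^ k * x) := by
  obtain ⟨m, f, l, rfl⟩ := h
  exact ⟨k + m, f, l, by rw [zpow_add]; group⟩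

lemma NF_b_aux (f : ℤ) (l : List Bool) : NF (gb * wd l * gD ^ f) := by
  cases l with
  | nil =>
    refine ⟨1, f - 1, [true], ?_⟩
    have : gb = gD * ga * gD⁻¹ := by rw [← gb_gD]; group
    rw [this]
    simp only [wd, List.map_nil, List.prod_nil, List.map_cons, List.prod_cons, if_true]
    rw [zpow_sub, zpow_one]
    group
  | cons c l =>
    cases c with
    | true =>
      refine ⟨1, f, false :: l, ?_⟩
      have : gb * ga = gD * gb⁻¹ := by unfold gD; rw [g_braid]; group
      simp only [wd, List.map_cons, List.prod_cons, if_true]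
      rw [← mul_assoc gb, this]
      simp [mul_assoc]
    | false =>
      refine ⟨0, f, l, ?_⟩
      simp [wd]

lemma NF_a {x : BraidGroup 3} (h : NF x) : NF (ga * x) := by
  obtain ⟨m, f, l, rfl⟩ := h
  rcases Int.even_or_odd' m with ⟨k, rfl | rfl⟩
  · refine ⟨2 * k, f, true :: l, ?_⟩
    have h : Commute ga (gD ^ (2 * k)) := by
      rw [zpow_mul]; exact ga_gD2.zpow_right k
    simp only [wd, List.map_cons, List.prod_cons, if_true]
    rw [← mul_assoc, ← mul_assoc, h.eq]
    simp only [mul_assoc]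
  · have h : Commute ga (gD ^ (2 * k)) := by
      rw [zpow_mul]; exact ga_gD2.zpow_right k
    have e : ga * (gD ^ (2 * k + 1) * wd l * gD ^ f) =
        gD ^ (2 * k + 1) * (gb * wd l * gD ^ f) := by
      rw [zpow_add, zpow_one, ← mul_assoc, ← mul_assoc, ← mul_assoc, h.eq, mul_assoc (gD ^ (2 * k)),
        ga_gD]
      group
    rw [e]
    exact NF_D _ (NF_b_aux f l)

lemma NF_b {x : BraidGroup 3} (h : NF x) : NF (gb * x) := by
  have : gb * x = gD ^ (1 : ℤ) * (ga * (gD ^ (-1 : ℤ) * x)) := by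
    rw [zpow_one, ← mul_assoc, ← gb_gD]; group
  rw [this]
  exact NF_D _ (NF_a (NF_D _ h))

lemma NF_ai {x : BraidGroup 3} (h : NF x) : NF (ga⁻¹ * x) := by
  have : ga⁻¹ * x = gb * (ga * (gD ^ (-1 : ℤ) * x)) := by
    unfold gD; group
  rw [this]
  exact NF_b (NF_a (NF_D _ h))

lemma NF_bi {x : BraidGroup 3} (h : NF x) : NF (gb⁻¹ * x) := by
  have : gb⁻¹ * x = ga * (gb * (gD ^ (-1 : ℤ) * x)) := by
    unfold gD; rw [g_braid]; group
  rw [this]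
  exact NF_a (NF_b (NF_D _ h))

lemma of_eq (i : Fin (3 - 1)) : (PresentedGroup.mk (braidRels 3) (FreeGroup.of i)) = ga ∨
    (PresentedGroup.mk (braidRels 3) (FreeGroup.of i)) = gb := by
  rcases i with ⟨i, hi⟩
  have : i = 0 ∨ i = 1 := by omega
  rcases this with rfl | rfl
  · left; rfl
  · right; rfl

lemma NF_all (x : BraidGroup 3) : NF x := by
  obtain ⟨w, rfl⟩ := PresentedGroup.mk_surjective (braidRels 3) x
  have key : ∀ y, NF y → NF (PresentedGroup.mk (braidRels 3) w * y) := by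
    induction w using FreeGroup.induction_on with
    | C1 => intro y hy; simpa using hy
    | of i =>
      intro y hy
      rcases of_eq i with h | h <;> rw [h]
      · exact NF_a hy
      · exact NF_b hy
    | inv_of i _ =>
      intro y hy
      rw [map_inv]
      rcases of_eq i with h | h <;> rw [h]
      · exact NF_ai hy
      · exact NF_bi hy
    | mul u v hu hv =>
      intro y hy
      rw [map_mul, mul_assoc]
      exact hu _ (hv _ hy)
  have := key 1 ⟨0, 0, [], by simp [wd]⟩
  rwa [mul_one] at this

lemma phi_wd (l : List Bool) : 0 ≤ (phi (wd l)).1 0 0 ∧ 0 ≤ (phi (wd l)).1 0 1 ∧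
    0 ≤ (phi (wd l)).1 1 0 ∧ 0 ≤ (phi (wd l)).1 1 1 ∧
    1 ≤ (phi (wd l)).1 0 0 + (phi (wd l)).1 0 1 ∧
    1 ≤ (phi (wd l)).1 1 0 + (phi (wd l)).1 1 1 ∧
    2 + (l.length : ℤ) ≤ (phi (wd l)).1 0 0 + (phi (wd l)).1 0 1 +
      (phi (wd l)).1 1 0 + (phi (wd l)).1 1 1 := by
  induction l with
  | nil => simp [wd]
  | cons c l ih =>
    have hw : wd (c :: l) = (if c then ga else gb⁻¹) * wd l := by simp [wd]
    rw [hw]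
    cases c with
    | true =>
      simp only [if_true, map_mul, phi_ga, mul00, mul01, mul10, mul11]
      generalize phi (wd l) = X at *
      simp [M1]
      grind
    | false =>
      simp only [Bool.false_eq_true, if_false, map_mul, map_inv, phi_gb, mul00, mul01, mul10, mul11,
        inv00, inv01, inv10, inv11]
      generalize phi (wd l) = X at *
      simp [M2]
      grind

lemma phi_gD_sq : phi gD ^ 2 = -1 := by
  rw [pow_two]
  simp only [gD, map_mul, phi_ga, phi_gb]
  apply sl_ext <;> simp only [mul00, mul01, mul10, mul11] <;> simp [M1, M2]

lemma neg_one_zpow (k : ℤ) : (-1 : SL) ^ k = 1 ∨ (-1 : SL) ^ k = -1 := by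
  rcases Int.even_or_odd' k with ⟨j, rfl | rfl⟩
  · left; rw [zpow_mul]; simp
  · right; rw [zpow_add, zpow_mul]; simp

/-- Sum of entries. -/
def es (X : SL) : ℤ := X.1 0 0 + X.1 0 1 + X.1 1 0 + X.1 1 1

lemma gD_pow (k : ℤ) : phi gD ^ k = 1 ∨ phi gD ^ k = -1 ∨ phi gD ^ k = phi gD ∨
    phi gD ^ k = - phi gD := by
  rcases Int.even_or_odd' k with ⟨j, rfl | rfl⟩
  · rw [zpow_mul]
    rw [show phi gD ^ (2 : ℤ) = -1 from phi_gD_sq]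
    rcases neg_one_zpow j with h | h <;> simp [h]
  · rw [zpow_add, zpow_mul]
    rw [show phi gD ^ (2 : ℤ) = -1 from phi_gD_sq]
    rcases neg_one_zpow j with h | h <;> simp [h]

lemma es_neg (X : SL) : es (-X) = - es X := by
  simp [es]; ring

lemma es_gD : es (phi gD) = 0 := by
  simp only [gD, map_mul, phi_ga, phi_gb]
  simp only [es, mul00, mul01, mul10, mul11]; simp [M1, M2]

lemma es_one : es 1 = 2 := by simp [es]

lemma es_gD_pow (k : ℤ) : es (phi gD ^ k) ≤ 2 ∧ es (-(phi gD ^ k)) ≤ 2 := by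
  rw [es_neg]
  rcases gD_pow k with h | h | h | h <;> rw [h] <;> simp [es_neg, es_gD, es_one]

/-- The kernel lemma. -/
theorem ker_lemma (x : BraidGroup 3) (h : phi x = 1 ∨ phi x = -1) (he : expSumHom x = 1) :
    x = 1 := by
  obtain ⟨m, f, l, rfl⟩ := NF_all x
  have h1 : phi (wd l) = phi gD ^ (-m - f) ∨ phi (wd l) = -(phi gD ^ (-m - f)) := by
    simp only [map_mul, map_zpow] at h
    rcases h with h | h
    · left
      have : phi (wd l) = (phi gD ^ m)⁻¹ * (phi gD ^ m * phi (wd l) * phi gD ^ f) * (phi gD ^ f)⁻¹ := by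
        group
      rw [this, h]; group
    · right
      have : phi (wd l) = (phi gD ^ m)⁻¹ * (phi gD ^ m * phi (wd l) * phi gD ^ f) * (phi gD ^ f)⁻¹ := by
        group
      rw [this, h, mul_neg, neg_mul]; congr 1; group
  have h2 : es (phi (wd l)) ≤ 2 := by
    rcases h1 with h1 | h1 <;> rw [h1]
    · exact (es_gD_pow _).1
    · exact (es_gD_pow _).2
  have h3 := (phi_wd l).2.2.2.2.2.2
  unfold es at h2
  have h4 : l.length = 0 := by omega
  rw [List.length_eq_zero_iff] at h4
  subst h4
  simp only [wd, List.map_nil, List.prod_nil, mul_one] at he ⊢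
  rw [← zpow_add] at he ⊢
  rw [map_zpow] at he
  simp only [gD, map_mul, exp_ga, exp_gb] at he
  have he' := congrArg Multiplicative.toAdd he
  simp at he'
  have : m + f = 0 := by omega
  rw [this, zpow_zero]

lemma phi_comm {x y : BraidGroup 3} (h : phi x * phi y = phi y * phi x) : Commute x y := by
  have : x * y * (y * x)⁻¹ = 1 := by
    apply ker_lemma
    · left; simp only [map_mul, map_inv, h]; group
    · simp only [map_mul, map_inv]; rw [mul_comm (expSumHom x)]; group
  rw [mul_inv_eq_one] at this
  exact this

lemma commute_iff (x y : BraidGroup 3) : Commute x y ↔ phi x * phi y = phi y * phi x :=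
  ⟨fun h => by rw [← map_mul, h.eq, map_mul], phi_comm⟩

/-- The projective group. -/
abbrev PG := SL ⧸ Subgroup.center SL

/-- The projection. -/
def pr : SL →* PG := QuotientGroup.mk' _

lemma scal_of_center {X : SL} (h : X ∈ Subgroup.center SL) : Scal X := by
  rw [Subgroup.mem_center_iff] at h
  have h1 := h M1
  have h2 := h M2
  rw [comm_iff] at h1 h2
  simp [M1, M2] at h1 h2
  refine ⟨?_, ?_, ?_⟩ <;> omega

lemma pr_one_iff (X : SL) : pr X = 1 ↔ X = 1 ∨ X = -1 := by
  unfold pr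
  rw [QuotientGroup.mk'_apply, QuotientGroup.eq_one_iff]
  constructor
  · intro h; exact scal_one_or (scal_of_center h)
  · rintro (rfl | rfl)
    · exact one_mem _
    · rw [Subgroup.mem_center_iff]; intro g; simp

lemma pr_eq_of {X Y : SL} (h : X = Y ∨ X = -Y) : pr X = pr Y := by
  rcases h with rfl | rfl
  · rfl
  · rw [← mul_inv_eq_one, ← map_inv, ← map_mul, pr_one_iff]; right; simp

/-- The map to the projective group. -/
def pp : BraidGroup 3 →* PG := pr.comp phi

lemma pp_inj {x y : BraidGroup 3} (h : pp x = pp y) (he : expSumHom x = expSumHom y) : x = y := by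
  rw [← mul_inv_eq_one]
  apply ker_lemma
  · rw [← pr_one_iff, map_mul, map_mul, map_inv, map_inv]
    change pp x * (pp y)⁻¹ = 1
    rw [h, mul_inv_cancel]
  · rw [map_mul, map_inv, he, mul_inv_cancel]

end HB
/-! ## Part 3: Hurwitz orbits of triples -/

namespace HB

section orbit
variable {G : Type*} [Group G]

/-- The first move. -/
abbrev i0 : Fin (3 - 1) := ⟨0, by decide⟩
/-- The second move. -/
abbrev i1 : Fin (3 - 1) := ⟨1, by decide⟩

lemma act_one (s : Fin 3 → G) : hurwitzAct (1 : FreeGroup (Fin (3 - 1))) s = s := by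
  simp [hurwitzAct]

lemma act_mul (v w : FreeGroup (Fin (3 - 1))) (s : Fin 3 → G) :
    hurwitzAct (v * w) s = hurwitzAct w (hurwitzAct v s) := by
  simp [hurwitzAct]

lemma act_of (i : Fin (3 - 1)) (s : Fin 3 → G) :
    hurwitzAct (FreeGroup.of i) s = hEquiv i s := by
  simp [hurwitzAct]

lemma act_inv_of (i : Fin (3 - 1)) (s : Fin 3 → G) :
    hurwitzAct (FreeGroup.of i)⁻¹ s = (hEquiv i).symm s := by
  simp [hurwitzAct]

lemma act_mem (S : Set (Fin 3 → G)) (h : ∀ i, ∀ t ∈ S, hEquiv i t ∈ S)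
    (h' : ∀ i, ∀ t ∈ S, (hEquiv i).symm t ∈ S) (w : FreeGroup (Fin (3 - 1))) :
    ∀ t ∈ S, hurwitzAct w t ∈ S := by
  induction w using FreeGroup.induction_on with
  | C1 => intro t ht; rwa [act_one]
  | of i => intro t ht; rw [act_of]; exact h i t ht
  | inv_of i _ => intro t ht; rw [act_inv_of]; exact h' i t ht
  | mul u v hu hv => intro t ht; rw [act_mul]; exact hv _ (hu _ ht)

lemma symm_mem_of_finite {α : Type*} (S : Set α) (hS : S.Finite) (e : Equiv.Perm α)
    (h : ∀ t ∈ S, e t ∈ S) : ∀ t ∈ S, e.symm t ∈ S := by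
  intro t ht
  have hsurj := ((hS.injOn_iff_bijOn_of_mapsTo (f := e) h).1 e.injective.injOn).surjOn
  obtain ⟨u, hu, rfl⟩ := hsurj ht
  simpa using hu

lemma orbit_move (s : Fin 3 → G) (i : Fin (3 - 1)) (t : Fin 3 → G) (ht : t ∈ hurwitzOrbit s) :
    hEquiv i t ∈ hurwitzOrbit s := by
  obtain ⟨w, rfl⟩ := ht
  exact ⟨w * FreeGroup.of i, by rw [act_mul, act_of]⟩

lemma self_mem_orbit (s : Fin 3 → G) : s ∈ hurwitzOrbit s := ⟨1, act_one s⟩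

/-- A predicate closed under forward moves and true somewhere on a finite orbit holds everywhere. -/
lemma orbit_pred (s : Fin 3 → G) (hfin : (hurwitzOrbit s).Finite) (P : (Fin 3 → G) → Prop)
    (hP : ∀ i t, P t → P (hEquiv i t)) (t' : Fin 3 → G) (ht' : t' ∈ hurwitzOrbit s)
    (h' : P t') : ∀ t ∈ hurwitzOrbit s, P t := by
  have hS : ({t | t ∈ hurwitzOrbit s ∧ P t}).Finite := hfin.subset (fun t h => h.1)
  have h1 : ∀ i, ∀ t ∈ {t | t ∈ hurwitzOrbit s ∧ P t}, hEquiv i t ∈ {t | t ∈ hurwitzOrbit s ∧ P t} :=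
    fun i t ht => ⟨orbit_move s i t ht.1, hP i t ht.2⟩
  have key := act_mem {t | t ∈ hurwitzOrbit s ∧ P t} h1
    (fun i => symm_mem_of_finite _ hS (hEquiv i) (h1 i))
  intro t ht
  obtain ⟨w, rfl⟩ := ht'
  obtain ⟨v, rfl⟩ := ht
  have := key (w⁻¹ * v) _ ⟨⟨w, rfl⟩, h'⟩
  rw [← act_mul, mul_inv_cancel_left] at this
  exact this.2

lemma h0_0 (t : Fin 3 → G) : hEquiv i0 t 0 = t 1 := by simp [hEquiv]
lemma h0_1 (t : Fin 3 → G) : hEquiv i0 t 1 = (t 1)⁻¹ * t 0 * t 1 := by simp [hEquiv]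
lemma h0_2 (t : Fin 3 → G) : hEquiv i0 t 2 = t 2 := by simp [hEquiv]
lemma h1_0 (t : Fin 3 → G) : hEquiv i1 t 0 = t 0 := by simp [hEquiv]
lemma h1_1 (t : Fin 3 → G) : hEquiv i1 t 1 = t 2 := by simp [hEquiv]
lemma h1_2 (t : Fin 3 → G) : hEquiv i1 t 2 = (t 2)⁻¹ * t 1 * t 2 := by simp [hEquiv]

lemma fin2_cases (i : Fin (3 - 1)) : i = i0 ∨ i = i1 := by
  rcases i with ⟨i, hi⟩
  have : i = 0 ∨ i = 1 := by omega
  rcases this with rfl | rfl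
  · left; rfl
  · right; rfl

/-- A finite set of triples closed under the Hurwitz moves. -/
structure Closed (O : Set (G × G × G)) : Prop where
  fin : O.Finite
  m0 : ∀ a b c, (a, b, c) ∈ O → (b, b⁻¹ * a * b, c) ∈ O
  m1 : ∀ a b c, (a, b, c) ∈ O → (a, c, c⁻¹ * b * c) ∈ O

lemma closed_image {H : Type*} [Group H] (f : G →* H) (s : Fin 3 → G)
    (hfin : (hurwitzOrbit s).Finite) :
    Closed (Set.image (fun t : Fin 3 → G => (f (t 0), f (t 1), f (t 2))) (hurwitzOrbit s)) := by
  refine ⟨hfin.image _, ?_, ?_⟩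
  · rintro a b c ⟨t, ht, h⟩
    simp only [Prod.mk.injEq] at h
    obtain ⟨rfl, rfl, rfl⟩ := h
    refine ⟨hEquiv i0 t, orbit_move _ _ _ ht, ?_⟩
    simp only [h0_0, h0_1, h0_2, map_mul, map_inv]
  · rintro a b c ⟨t, ht, h⟩
    simp only [Prod.mk.injEq] at h
    obtain ⟨rfl, rfl, rfl⟩ := h
    refine ⟨hEquiv i1 t, orbit_move _ _ _ ht, ?_⟩
    simp only [h1_0, h1_1, h1_2, map_mul, map_inv]

lemma Closed.m0' {O : Set (G × G × G)} (hO : Closed O) (a b c : G) (h : (a, b, c) ∈ O) : (a * b * a⁻¹, a, c) ∈ O := by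
  let e : Equiv.Perm (G × G × G) :=
    { toFun := fun t => (t.2.1, t.2.1⁻¹ * t.1 * t.2.1, t.2.2)
      invFun := fun t => (t.1 * t.2.1 * t.1⁻¹, t.1, t.2.2)
      left_inv := by rintro ⟨a, b, c⟩; simp [mul_assoc]
      right_inv := by rintro ⟨a, b, c⟩; simp [mul_assoc] }
  exact symm_mem_of_finite O hO.fin e (fun t ht => hO.m0 t.1 t.2.1 t.2.2 ht) _ h

lemma Closed.rot {O : Set (G × G × G)} (hO : Closed O) (a b c : G) (h : (a, b, c) ∈ O) :
    (b, c, (a * b * c)⁻¹ * a * (a * b * c)) ∈ O := by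
  have := hO.m1 _ _ _ (hO.m0 _ _ _ h)
  convert this using 3
  group

lemma Closed.pow01 {O : Set (G × G × G)} (hO : Closed O) (a b c : G) (h : (a, b, c) ∈ O) (n : ℕ) :
    (((a * b) ^ n)⁻¹ * a * (a * b) ^ n, ((a * b) ^ n)⁻¹ * b * (a * b) ^ n, c) ∈ O := by
  induction n with
  | zero => simpa using h
  | succ n ih =>
    have := hO.m0 _ _ _ (hO.m0 _ _ _ ih)
    generalize hx : (a * b) ^ n = x at *
    have hc : Commute x (a * b) := by rw [← hx]; exact (Commute.refl (a * b)).pow_left n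
    rw [pow_succ, hx]
    have e : x⁻¹ * a * x * (x⁻¹ * b * x) = a * b := by
      have : x⁻¹ * a * x * (x⁻¹ * b * x) = x⁻¹ * ((a * b) * x) := by group
      rw [this, ← hc.eq]; group
    convert this using 2
    · have : (x⁻¹ * b * x)⁻¹ * (x⁻¹ * a * x) * (x⁻¹ * b * x) =
        (x⁻¹ * a * x * (x⁻¹ * b * x))⁻¹ * (x⁻¹ * a * x) * (x⁻¹ * a * x * (x⁻¹ * b * x)) := by group
      rw [this, e]; group
    · congr 1
      have : ((x⁻¹ * b * x)⁻¹ * (x⁻¹ * a * x) * (x⁻¹ * b * x))⁻¹ * (x⁻¹ * b * x) *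
        ((x⁻¹ * b * x)⁻¹ * (x⁻¹ * a * x) * (x⁻¹ * b * x)) =
        (x⁻¹ * a * x * (x⁻¹ * b * x))⁻¹ * (x⁻¹ * b * x) * (x⁻¹ * a * x * (x⁻¹ * b * x)) := by group
      rw [this, e]; group

lemma Closed.powT {O : Set (G × G × G)} (hO : Closed O) (a b c : G) (h : (a, b, c) ∈ O) (n : ℕ) :
    (((a * b * c) ^ n)⁻¹ * a * (a * b * c) ^ n, ((a * b * c) ^ n)⁻¹ * b * (a * b * c) ^ n,
      ((a * b * c) ^ n)⁻¹ * c * (a * b * c) ^ n) ∈ O := by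
  induction n with
  | zero => simpa using h
  | succ n ih =>
    have := hO.rot _ _ _ (hO.rot _ _ _ (hO.rot _ _ _ ih))
    generalize hx : (a * b * c) ^ n = x at *
    have hc : Commute x (a * b * c) := by rw [← hx]; exact (Commute.refl (a * b * c)).pow_left n
    rw [pow_succ, hx]
    generalize ha' : x⁻¹ * a * x = a' at *
    generalize hb' : x⁻¹ * b * x = b' at *
    generalize hc' : x⁻¹ * c * x = c' at *
    have e : a' * b' * c' = a * b * c := by
      have : a' * b' * c' = x⁻¹ * ((a * b * c) * x) := by rw [← ha', ← hb', ← hc']; group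
      rw [this, ← hc.eq]; group
    have e2 : b' * c' * ((a' * b' * c')⁻¹ * a' * (a' * b' * c')) = a * b * c := by
      rw [← e]; group
    have e3 : c' * ((a' * b' * c')⁻¹ * a' * (a' * b' * c')) *
      ((b' * c' * ((a' * b' * c')⁻¹ * a' * (a' * b' * c')))⁻¹ * b' *
        (b' * c' * ((a' * b' * c')⁻¹ * a' * (a' * b' * c')))) = a * b * c := by
      rw [e2, e]; rw [← e]; group
    rw [e3, e2, e] at this
    convert this using 2
    · rw [← ha']; group
    · congr 1
      · rw [← hb']; group
      · rw [← hc']; group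

lemma Closed.exists_pow {O : Set (G × G × G)} (hO : Closed O) {x a : G} (f : ℕ → G × G) (h : ∀ n, ((x ^ n)⁻¹ * a * x ^ n, f n) ∈ O) :
    ∃ k : ℕ, x ^ (k + 1) * a = a * x ^ (k + 1) := by
  have hni : ¬ Set.InjOn (fun n : ℕ => ((x ^ n)⁻¹ * a * x ^ n, f n)) Set.univ := by
    intro hi
    have := Set.infinite_univ.image hi
    exact this (hO.fin.subset (by rintro _ ⟨n, -, rfl⟩; exact h n))
  unfold Set.InjOn at hni
  push Not at hni
  obtain ⟨m, -, n, -, he, hne⟩ := hni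
  have key : ∀ m n : ℕ, m < n → (x ^ m)⁻¹ * a * x ^ m = (x ^ n)⁻¹ * a * x ^ n →
      ∃ k : ℕ, x ^ (k + 1) * a = a * x ^ (k + 1) := by
    intro m n hlt he
    obtain ⟨k, rfl⟩ := Nat.exists_eq_add_of_lt hlt
    refine ⟨k, ?_⟩
    have hx : x ^ (m + k + 1) = x ^ (k + 1) * x ^ m := by rw [← pow_add]; congr 1; ring
    rw [hx] at he
    generalize x ^ (k + 1) = y at *
    generalize x ^ m = z at *
    have h2 : a = z * (z⁻¹ * a * z) * z⁻¹ := by group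
    have : y * a = y * (z * (z⁻¹ * a * z) * z⁻¹) := by rw [← h2]
    rw [this, he]; group
  have he1 := congrArg Prod.fst he
  simp only at he1
  rcases lt_or_gt_of_ne hne with h | h
  · exact key m n h he1
  · exact key n m h he1.symm

end orbit

/-! Powers in `SL(2, ℤ)`. -/

lemma pow_form (X : SL) (hX : 2 ≤ |tr X|) (k : ℕ) : ∃ u v : ℤ, |v| < |u| ∧
    (X ^ (k + 1)).1 0 0 = u * X.1 0 0 - v ∧ (X ^ (k + 1)).1 0 1 = u * X.1 0 1 ∧
    (X ^ (k + 1)).1 1 0 = u * X.1 1 0 ∧ (X ^ (k + 1)).1 1 1 = u * X.1 1 1 - v := by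
  induction k with
  | zero => exact ⟨1, 0, by simp, by simp, by simp, by simp, by simp⟩
  | succ k ih =>
    obtain ⟨u, v, hlt, h1, h2, h3, h4⟩ := ih
    have hd := det_eq X
    refine ⟨u * tr X - v, u, ?_, ?_, ?_, ?_, ?_⟩
    · have := abs_sub_abs_le_abs_sub (u * tr X) v
      rw [abs_mul] at this
      nlinarith [abs_nonneg u]
    all_goals
      rw [pow_succ]
      simp only [mul00, mul01, mul10, mul11, h1, h2, h3, h4, tr]
    · linear_combination (-u) * hd
    · ring
    · ring
    · linear_combination (-u) * hd

lemma pow_comm (X A : SL) (hX : 2 ≤ |tr X|) (k : ℕ) (h : X ^ (k + 1) * A = A * X ^ (k + 1)) :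
    X * A = A * X := by
  obtain ⟨u, v, hlt, h1, h2, h3, h4⟩ := pow_form X hX k
  rw [comm_iff, h1, h2, h3, h4] at h
  rw [comm_iff]
  have hu : u ≠ 0 := by rintro rfl; simp at hlt; exact absurd hlt (not_lt.2 (abs_nonneg v))
  obtain ⟨a1, a2, a3⟩ := h
  refine ⟨?_, ?_, ?_⟩ <;> apply mul_left_cancel₀ hu <;> linarith

/-- The dichotomy for a pair. -/
def Pair (A B : SL) : Prop :=
  (A * B = B * A ∧ Fr (tr A) (tr B) (tr (A * B)) = 4) ∨
  (A * B ≠ B * A ∧ |tr (A * B)| ≤ 1 ∧ 4 < Fr (tr A) (tr B) (tr (A * B)))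

lemma Closed.pair01 {O : Set (SL × SL × SL)} (hO : Closed O) {A B C : SL} (h : (A, B, C) ∈ O) : Pair A B := by
  by_cases hc : A * B = B * A
  · exact Or.inl ⟨hc, fr_eq A B hc⟩
  · right
    have ht : |tr (A * B)| ≤ 1 := by
      by_contra hgt
      push Not at hgt
      obtain ⟨k, hk⟩ := hO.exists_pow _ (hO.pow01 A B C h)
      have := pow_comm (A * B) A (by omega) k hk
      apply hc
      have h2 : A * (B * A) = A * (A * B) := by rw [← mul_assoc]; exact this
      exact (mul_left_cancel h2).symm
    exact ⟨hc, ht, fr_gt A B ht hc⟩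

lemma Closed.pair12 {O : Set (SL × SL × SL)} (hO : Closed O) {A B C : SL} (h : (A, B, C) ∈ O) : Pair B C :=
  hO.pair01 (hO.rot _ _ _ h)

lemma Closed.pair02 {O : Set (SL × SL × SL)} (hO : Closed O) {A B C : SL} (h : (A, B, C) ∈ O) : Pair A C :=
  hO.pair01 (hO.m1 _ _ _ h)

lemma Closed.ellT {O : Set (SL × SL × SL)} (hO : Closed O) {A B C : SL} (h : (A, B, C) ∈ O) : |tr (A * B * C)| ≤ 1 ∨
    ((A * B * C) * A = A * (A * B * C) ∧ (A * B * C) * B = B * (A * B * C) ∧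
      (A * B * C) * C = C * (A * B * C)) := by
  by_cases hT : |tr (A * B * C)| ≤ 1
  · exact Or.inl hT
  · right
    push Not at hT
    have key : ∀ A B C : SL, (A, B, C) ∈ O → 1 < |tr (A * B * C)| →
        (A * B * C) * A = A * (A * B * C) := by
      intro A B C h hT
      obtain ⟨k, hk⟩ := hO.exists_pow _ (hO.powT A B C h)
      exact pow_comm _ A (by omega) k hk
    have k1 := key A B C h hT
    have e : (A * B * C)⁻¹ * A * (A * B * C) = A := by
      rw [mul_assoc, ← k1]; group
    have h2 := hO.rot _ _ _ h
    rw [e] at h2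
    have tc : tr (B * C * A) = tr (A * B * C) := by rw [tr_mul_comm, ← mul_assoc]
    have e2 : B * C * A = A * B * C := by
      have : A * (B * C * A) = A * (A * B * C) := by rw [← k1]; group
      exact mul_left_cancel this
    have k2 := key B C A h2 (by rw [tc]; exact hT)
    rw [e2] at k2
    refine ⟨k1, k2, ?_⟩
    have : Commute (A * B * C) (A * B) := Commute.mul_right k1 k2
    have h3 : Commute (A * B * C) ((A * B)⁻¹ * (A * B * C)) :=
      (this.inv_right).mul_right (Commute.refl _)
    rw [show (A * B)⁻¹ * (A * B * C) = C by group] at h3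
    exact h3

end HB
/-! ## Part 4: integer lemmas -/

namespace HB

/-- Being a sign. -/
def Sg (x : ℤ) : Prop := x = 1 ∨ x = -1

lemma Sg.sq {x : ℤ} (h : Sg x) : x * x = 1 := by
  rcases h with rfl | rfl <;> norm_num

lemma Sg.mul {x y : ℤ} (h : Sg x) (h' : Sg y) : Sg (x * y) := by
  rcases h with rfl | rfl <;> rcases h' with rfl | rfl <;> simp [Sg]

lemma sg_of {x : ℤ} (h : x ^ 2 = 1) : Sg x := by
  have : (x - 1) * (x + 1) = 0 := by linarith
  rcases mul_eq_zero.1 this with h | h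
  · left; linarith
  · right; linarith

lemma Sg.sq' {x : ℤ} (h : Sg x) : x ^ 2 = 1 := by
  rcases h with rfl | rfl <;> norm_num

lemma sq_ne_of (n x : ℤ) (D : ℤ) (hn : 0 ≤ n) (h1 : n ^ 2 < D) (h2 : D < (n + 1) ^ 2) : x ^ 2 ≠ D := by
  intro h
  rw [← h] at h1 h2
  have a1 := abs_lt_of_sq_lt_sq h2 (by linarith)
  have a2 : n < |x| := by
    by_contra hle
    push Not at hle
    have := sq_abs x
    nlinarith [abs_nonneg x]
  omega

/-- Case I with two zero pairs. -/
lemma caseI_two (p q r t z z' : ℤ) (ht : t = 0 ∨ Sg t) (hz : Sg z) (hz' : Sg z')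
    (h1 : p * q + r * t = 0) (h2 : q * r + p * t = 0) (h3 : z + z' = p * r + q * t)
    (hF : z ^ 2 - (p * r + q * t) * z + p ^ 2 + q ^ 2 + r ^ 2 + t ^ 2 + p * q * r * t = 4)
    (f1 : 4 < Fr p q 0) (f2 : 4 < Fr q r 0) (f3 : 4 < Fr p r z) : False := by
  unfold Fr at *
  rcases ht with rfl | ht
  · have h1' : p * q = 0 := by linarith
    have h2' : q * r = 0 := by linarith
    by_cases hq : q = 0
    · subst hq; nlinarith
    · have hp : p = 0 := (mul_eq_zero.1 h1').resolve_right hq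
      have hr : r = 0 := (mul_eq_zero.1 h2').resolve_left hq
      subst hp; subst hr
      have := hz.sq'
      exact sq_ne_of 1 q 3 (by norm_num) (by norm_num) (by norm_num) (by linarith)
  · have hr : r = - (p * q * t) := by
      have := ht.sq
      linear_combination t * h1 - r * this
    have ht2 := ht.sq
    have hz2 := hz.sq
    have hp : p * (q ^ 2 - 1) = 0 := by
      rw [hr] at h2
      linear_combination (-t) * h2 + (-p * q ^ 2 + p) * ht2
    rcases mul_eq_zero.1 hp with hp | hp
    · subst hp
      simp at hr; subst hr
      have e : q ^ 2 - q * (t * z) = 2 := by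
        linear_combination hF - hz2 - ht2
      rcases ht.mul hz with h | h <;> rw [h] at e
      · have : (q - 2) * (q + 1) = 0 := by linarith
        rcases mul_eq_zero.1 this with h | h
        · have : q = 2 := by linarith
          subst this; norm_num at f1
        · have : q = -1 := by linarith
          subst this; norm_num at f1
      · have : (q + 2) * (q - 1) = 0 := by linarith
        rcases mul_eq_zero.1 this with h | h
        · have : q = -2 := by linarith
          subst this; norm_num at f1
        · have : q = 1 := by linarith
          subst this; norm_num at f1
    · have hq : Sg q := sg_of (by linarith)
      have hq2 := hq.sq
      have e : (p ^ 2 - 1) * (1 + q * t * z) = 0 := by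
        rw [hr] at hF
        linear_combination hF - hz2 - (1 + q ^ 2 * p ^ 2 - q ^ 2 * p ^ 2) * ht2 - (1 + p ^ 2 * (t ^ 2 - t ^ 2)) * hq2
      rcases mul_eq_zero.1 e with e | e
      · nlinarith
      · have hz3 : z = - (q * t) := by
          linear_combination (q * t) * e - z * (q ^ 2 * ht2 + hq2)
        have hz4 : z' = q * t * (2 - p ^ 2) := by
          rw [hr, hz3] at h3
          linear_combination h3
        have h5 : (2 - p ^ 2) ^ 2 = 1 := by
          have := hz'.sq'
          rw [hz4] at this
          have hqt := (hq.mul ht).sq'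
          linear_combination this - (2 - p ^ 2) ^ 2 * hqt
        rcases sg_of h5 with h | h
        · nlinarith
        · exact sq_ne_of 1 p 3 (by norm_num) (by norm_num) (by norm_num) (by linarith)

lemma small_pair (p q x : ℤ) (hx : Sg x) (h : 4 < Fr p q x) : 2 ≤ |p| ∨ 2 ≤ |q| := by
  by_contra hc
  push Not at hc
  obtain ⟨h1, h2⟩ := hc
  have h1' : |p| ≤ 1 := by omega
  have h2' : |q| ≤ 1 := by omega
  rw [abs_le] at h1' h2'
  obtain ⟨a1, a2⟩ := h1'
  obtain ⟨b1, b2⟩ := h2'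
  unfold Fr at h
  interval_cases p <;> interval_cases q <;> rcases hx with rfl | rfl <;> norm_num at h

lemma mul_small {a b n : ℤ} (h : |a * b| ≤ n) (hb : b ≠ 0) : |a| ≤ n := by
  rw [abs_mul] at h
  have : 1 ≤ |b| := Int.one_le_abs hb
  nlinarith [abs_nonneg a]

set_option maxRecDepth 100000 in
lemma caseI_finite : ∀ p ∈ List.range 13, ∀ q ∈ List.range 13, ∀ x ∈ ([1, -1] : List ℤ),
    4 < Fr ((p : ℤ) - 6) ((q : ℤ) - 6) x → ∀ r ∈ List.range 13, ∀ y ∈ ([1, -1] : List ℤ),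
    4 < Fr ((q : ℤ) - 6) ((r : ℤ) - 6) y → ∀ z ∈ ([1, -1] : List ℤ),
    4 < Fr ((p : ℤ) - 6) ((r : ℤ) - 6) z → ∀ t ∈ ([1, -1] : List ℤ),
    (((p : ℤ) - 6) * ((q : ℤ) - 6) + ((r : ℤ) - 6) * t - y * z - x) ^ 2 = 1 →
    (((q : ℤ) - 6) * ((r : ℤ) - 6) + ((p : ℤ) - 6) * t - x * z - y) ^ 2 = 1 →
    (((p : ℤ) - 6) * ((r : ℤ) - 6) + ((q : ℤ) - 6) * t - x * y - z) ^ 2 = 1 →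
    x * y * z + x ^ 2 + y ^ 2 + z ^ 2 - (((p : ℤ) - 6) * ((q : ℤ) - 6) + ((r : ℤ) - 6) * t) * x
     - (((q : ℤ) - 6) * ((r : ℤ) - 6) + ((p : ℤ) - 6) * t) * y
     - (((p : ℤ) - 6) * ((r : ℤ) - 6) + ((q : ℤ) - 6) * t) * z
     + ((p : ℤ) - 6) ^ 2 + ((q : ℤ) - 6) ^ 2 + ((r : ℤ) - 6) ^ 2 + t ^ 2
     + ((p : ℤ) - 6) * ((q : ℤ) - 6) * ((r : ℤ) - 6) * t ≠ 4 := by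
  unfold Fr
  decide +kernel

/-- Case I with no zero pair. -/
lemma caseI_none (p q r t x y z x' y' z' : ℤ) (ht : t = 0 ∨ Sg t) (hx : Sg x) (hy : Sg y)
    (hz : Sg z) (hx' : Sg x') (hy' : Sg y') (hz' : Sg z')
    (h1 : x' = p * q + r * t - y * z - x) (h2 : y' = q * r + p * t - x * z - y)
    (h3 : z' = p * r + q * t - x * y - z)
    (hF : x * y * z + x ^ 2 + y ^ 2 + z ^ 2 - (p * q + r * t) * x - (q * r + p * t) * y
      - (p * r + q * t) * z + p ^ 2 + q ^ 2 + r ^ 2 + t ^ 2 + p * q * r * t = 4)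
    (f1 : 4 < Fr p q x) (f2 : 4 < Fr q r y) (f3 : 4 < Fr p r z) : False := by
  have s1 := small_pair _ _ _ hx f1
  have s2 := small_pair _ _ _ hy f2
  have s3 := small_pair _ _ _ hz f3
  have b1 : |p * q + r * t| ≤ 3 ∧ p * q + r * t ≠ 0 := by
    have : p * q + r * t = x + x' + y * z := by linarith
    rw [this]
    rcases hx with rfl | rfl <;> rcases hx' with h | h <;> rw [h] <;>
      rcases hy.mul hz with h | h <;> rw [h] <;> decide
  have b2 : |q * r + p * t| ≤ 3 ∧ q * r + p * t ≠ 0 := by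
    have : q * r + p * t = y + y' + x * z := by linarith
    rw [this]
    rcases hy with rfl | rfl <;> rcases hy' with h | h <;> rw [h] <;>
      rcases hx.mul hz with h | h <;> rw [h] <;> decide
  have b3 : |p * r + q * t| ≤ 3 ∧ p * r + q * t ≠ 0 := by
    have : p * r + q * t = z + z' + x * y := by linarith
    rw [this]
    rcases hz with rfl | rfl <;> rcases hz' with h | h <;> rw [h] <;>
      rcases hx.mul hy with h | h <;> rw [h] <;> decide
  rcases ht with rfl | ht
  · simp only [mul_zero, add_zero] at b1 b2 b3
    have m1 := b1.1
    have m2 := b2.1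
    have m3 := b3.1
    rw [abs_mul] at m1 m2 m3
    have hp : p ≠ 0 := by rintro rfl; simp at b1
    have hq : q ≠ 0 := by rintro rfl; simp at b1
    have hr : r ≠ 0 := by rintro rfl; simp at b2
    rcases s1 with s1 | s1
    · rcases s2 with s2 | s2 <;> nlinarith
    · rcases s3 with s3 | s3 <;> nlinarith
  · have key : ∀ p q r : ℤ, |q * r + p * t| ≤ 3 → |p * r + q * t| ≤ 3 → 2 ≤ |r| →
        |p| ≤ 6 ∧ |q| ≤ 6 := by
      intro p q r b2 b3 hr
      have hr1 : r - t ≠ 0 := by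
        intro h
        have : r = t := by linarith
        subst this
        rcases ht with rfl | rfl <;> norm_num at hr
      have hr2 : r + t ≠ 0 := by
        intro h
        have : r = -t := by linarith
        subst this
        rcases ht with rfl | rfl <;> norm_num at hr
      rw [abs_le] at b2 b3
      have e1 : |(q - p) * (r - t)| ≤ 6 := by
        rw [show (q - p) * (r - t) = (q * r + p * t) - (p * r + q * t) by ring, abs_le]
        constructor <;> linarith
      have e2 : |(q + p) * (r + t)| ≤ 6 := by
        rw [show (q + p) * (r + t) = (q * r + p * t) + (p * r + q * t) by ring, abs_le]
        constructor <;> linarith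
      have g1 := mul_small e1 hr1
      have g2 := mul_small e2 hr2
      rw [abs_le] at g1 g2 ⊢
      rw [abs_le]
      omega
    have hbd : |p| ≤ 6 ∧ |q| ≤ 6 ∧ |r| ≤ 6 := by
      have kr := key p q r b2.1 b3.1
      have kq := key p r q (by rw [mul_comm r q]; exact b2.1) b1.1
      have kp := key q r p (by rw [mul_comm r p]; exact b3.1) (by rw [mul_comm q p]; exact b1.1)
      rcases s1 with s1 | s1
      · rcases s2 with s2 | s2
        · exact ⟨(kq s2).1, (kp s1).1, (kp s1).2⟩
        · exact ⟨(kr s2).1, (kp s1).1, (kp s1).2⟩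
      · rcases s3 with s3 | s3
        · exact ⟨(kq s1).1, (kp s3).1, (kp s3).2⟩
        · exact ⟨(kr s3).1, (kr s3).2, (kq s1).2⟩
    obtain ⟨bp, bq, br⟩ := hbd
    rw [abs_le] at bp bq br
    obtain ⟨p', rfl⟩ : ∃ n : ℕ, p = (n : ℤ) - 6 := ⟨(p + 6).toNat, by omega⟩
    obtain ⟨q', rfl⟩ : ∃ n : ℕ, q = (n : ℤ) - 6 := ⟨(q + 6).toNat, by omega⟩
    obtain ⟨r', rfl⟩ : ∃ n : ℕ, r = (n : ℤ) - 6 := ⟨(r + 6).toNat, by omega⟩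
    have mem : ∀ {x : ℤ}, Sg x → x ∈ ([1, -1] : List ℤ) := by
      rintro x (rfl | rfl) <;> simp
    have hx2 := hx'.sq'
    have hy2 := hy'.sq'
    have hz2 := hz'.sq'
    rw [h1] at hx2
    rw [h2] at hy2
    rw [h3] at hz2
    exact caseI_finite p' (List.mem_range.2 (by omega)) q' (List.mem_range.2 (by omega)) x (mem hx) f1
      r' (List.mem_range.2 (by omega)) y (mem hy) f2 z (mem hz) f3 t (mem ht) hx2 hy2 hz2 hF

end HB
/-! ## Part 5: integer lemmas for the case with a commuting pair -/

namespace HB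

/-- All the numerical data of Case II. -/
structure NumII (p q r u v t w x1 : ℤ) : Prop where
  e1 : 2 * t = p * v + q * u - w * r
  e3 : w = x1 + u * v - r * t
  e4 : Fr p q w = 4
  par : p ^ 2 = 4 ↔ q ^ 2 = 4
  fx : 4 < Fr p q x1
  fu : 4 < Fr p r u
  fv : 4 < Fr q r v
  hz1 : |p * r + q * t - x1 * v - u| ≤ 1 ∨ Fr p r (p * r + q * t - x1 * v - u) = 4
  hy1 : |q * r + p * t - x1 * u - v| ≤ 1 ∨ Fr q r (q * r + p * t - x1 * u - v) = 4

lemma NumII.symm {p q r u v t w x1 : ℤ} (h : NumII p q r u v t w x1) :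
    NumII q p r v u t w x1 := by
  obtain ⟨e1, e3, e4, par, fx, fu, fv, hz1, hy1⟩ := h
  refine ⟨by linarith, by linarith, by unfold Fr at *; linarith, par.symm,
    by unfold Fr at *; linarith, fv, fu, hy1, hz1⟩

lemma ii_111 {p q r u v w x1 : ℤ} (h : NumII p q r u v 0 w x1) (hu : Sg u) (hv : Sg v)
    (hx : Sg x1) : w = 2 * (u * v) ∧ q = u * v * p ∧ r = u * p := by
  obtain ⟨e1, e3, e4, par, fx, fu, fv, hz1, hy1⟩ := h
  unfold Fr at *
  have u2 := hu.sq
  have v2 := hv.sq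
  rw [mul_zero, sub_zero] at e3
  have hc : x1 = u * v ∨ x1 = -(u * v) := by
    rcases hx with rfl | rfl <;> rcases hu with rfl | rfl <;> rcases hv with rfl | rfl <;> simp
  rcases hc with hc | hc
  · have hw : w = 2 * (u * v) := by linarith
    subst hw
    have h0 : (p - u * v * q) ^ 2 = 0 := by
      linear_combination e4 + (-4 + q ^ 2) * (v ^ 2 * u2 + v2)
    have h1 : p = u * v * q := by
      have := pow_eq_zero_iff (two_ne_zero) |>.1 h0
      linarith
    have h2 : q = u * v * p := by
      rw [h1]; linear_combination (-q) * (v ^ 2 * u2 + v2)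
    refine ⟨rfl, h2, ?_⟩
    have h3 : 2 * r = 2 * (u * p) := by
      rw [h2] at e1
      clear h0 h1 h2 e4 par fx fu fv hz1 hy1
      rcases hu with rfl | rfl <;> rcases hv with rfl | rfl <;> linarith
    linarith
  · exfalso
    have hw : w = 0 := by linarith
    subst hw
    have h1 : p = -(u * v * q) := by
      linear_combination (-v) * e1 - p * v2
    have h2 : p ^ 2 = q ^ 2 := by
      rw [h1]; linear_combination (q ^ 2) * (v ^ 2 * u2 + v2)
    exact sq_ne_of 1 q 2 (by norm_num) (by norm_num) (by norm_num) (by linarith)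

lemma small_par (p q e : ℤ) (he : Sg e) (h1 : p ^ 2 + q ^ 2 + e * (p * q) = 3)
    (h2 : 3 < p ^ 2 + q ^ 2 - e * (p * q)) (par : p ^ 2 = 4 ↔ q ^ 2 = 4) : False := by
  have e2 := he.sq
  have hp : p ^ 2 ≤ 4 := by
    nlinarith [sq_nonneg (2 * q + e * p)]
  have hq : q ^ 2 ≤ 4 := by
    nlinarith [sq_nonneg (2 * p + e * q)]
  have hp1 : p ≤ 2 := by nlinarith
  have hp2 : -2 ≤ p := by nlinarith
  have hq1 : q ≤ 2 := by nlinarith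
  have hq2 : -2 ≤ q := by nlinarith
  clear hp hq e2
  rcases he with rfl | rfl <;>
  interval_cases p <;> interval_cases q <;>
    first | (norm_num at h1; done) | (norm_num at h2; done) | (norm_num at par; done)

lemma ii_110 {p q r t w x1 : ℤ} (h : NumII p q r 0 0 t w x1) (ht : Sg t)
    (hx : Sg x1) : w = -2 * (r * t) ∧ q = - (r * t * p) ∧ Sg r := by
  obtain ⟨e1, e3, e4, par, fx, fu, fv, hz1, hy1⟩ := h
  have t2 := ht.sq
  have e1' : w * r = -2 * t := by linarith
  have e3' : w = x1 - r * t := by linarith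
  have hr : r ∣ 2 := by
    refine ⟨-(w * t), ?_⟩
    linear_combination (-2) * t2 + t * e1'
  have hr2 : |r| ≤ 2 := by
    have := Int.le_of_dvd (by norm_num) ((abs_dvd r 2).2 hr)
    exact this
  rw [abs_le] at hr2
  obtain ⟨r1, r2⟩ := hr2
  have rbig : ∀ s : ℤ, Sg s → r = 2 * s → False := by
    intro s hs h
    subst h
    have s2 := hs.sq
    have hw : w = -(s * t) := by
      have : 2 * (w + s * t) = 0 := by linear_combination s * e1' - 2 * w * s2
      linarith
    have hx1 : x1 = s * t := by linarith
    unfold Fr at *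
    have w2 := (hs.mul ht).sq
    have e5 : p ^ 2 + q ^ 2 + (s * t) * (p * q) = 3 := by rw [hw] at e4; linarith
    have e6 : 3 < p ^ 2 + q ^ 2 - (s * t) * (p * q) := by rw [hx1] at fx; linarith
    exact small_par p q (s * t) (hs.mul ht) e5 e6 par
  have hsg : Sg r := by
    have hr0 : r ≠ 0 := by rintro rfl; norm_num at hr
    have h2 : r ≠ 2 := fun h => rbig 1 (Or.inl rfl) (by rw [h]; norm_num)
    have h3 : r ≠ -2 := fun h => rbig (-1) (Or.inr rfl) (by rw [h]; norm_num)
    unfold Sg; omega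
  have rr := hsg.sq
  have hw : w = -2 * (r * t) := by linear_combination r * e1' - w * rr
  refine ⟨hw, ?_, hsg⟩
  have rt2 := (hsg.mul ht).sq
  unfold Fr at e4
  rw [hw] at e4
  have : (q + r * t * p) ^ 2 = 0 := by
    linear_combination e4 + (p ^ 2 - 4) * rt2
  have := pow_eq_zero_iff (two_ne_zero) |>.1 this
  linarith

lemma ii_101 {p q r u t w : ℤ} (h : NumII p q r u 0 t w 0) (ht : Sg t)
    (hu : Sg u) : p = u * r ∧ q = u * t * (2 - r ^ 2) ∧ w = -(r * t) := by
  obtain ⟨e1, e3, e4, par, fx, fu, fv, hz1, hy1⟩ := h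
  have t2 := ht.sq
  have u2 := hu.sq
  have hw : w = -(r * t) := by linarith
  have hq : q = u * t * (2 - r ^ 2) := by
    rw [hw] at e1
    linear_combination (-u) * e1 - q * u2
  refine ⟨?_, hq, hw⟩
  unfold Fr at *
  have hfac : (p - u * r) * (p - u * r * (r ^ 2 - 3)) = 0 := by
    rw [hw, hq] at e4
    linear_combination e4 - ((2 - r ^ 2) ^ 2 * t ^ 2 - r ^ 2 * (r ^ 2 - 3)) * u2
      - ((2 - r ^ 2) ^ 2 + r ^ 2 + p * u * (2 - r ^ 2) * r) * t2
  rcases mul_eq_zero.1 hfac with h | h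
  · linarith
  · have hp : p = u * r * (r ^ 2 - 3) := by linarith
    have hz : p * r + q * t - 0 * 0 - u = u * (r ^ 4 - 4 * r ^ 2 + 1) := by
      rw [hp, hq]; linear_combination u * (2 - r ^ 2) * t2
    rw [hz] at hz1
    rcases hz1 with hz1 | hz1
    · have hz2 : |r ^ 4 - 4 * r ^ 2 + 1| ≤ 1 := by
        rcases hu with rfl | rfl
        · simpa using hz1
        · rw [abs_mul] at hz1; simpa using hz1
      rw [abs_le] at hz2
      obtain ⟨k1, k2⟩ := hz2
      have hr0 : r ^ 2 ≤ 4 := by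
        by_contra hlt
        push Not at hlt
        nlinarith [show r ^ 4 = (r ^ 2) ^ 2 by ring]
      have hr1 : r ≤ 2 := by nlinarith
      have hr2 : -2 ≤ r := by nlinarith
      clear e1 e3 fu fv hy1 hw hq hfac hz hz1 h
      interval_cases r <;> first | (norm_num at k1; done) | (rw [hp]; norm_num; done)
    · exfalso
      have hR : (2 * r ^ 2 - 5) ^ 2 = 13 := by
        rw [hp] at hz1
        linear_combination (-4) * hz1 + (4 * (r ^ 2 * (r ^ 2 - 3) ^ 2 + (r ^ 4 - 4 * r ^ 2 + 1) ^ 2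
          - r ^ 2 * (r ^ 2 - 3) * (r ^ 4 - 4 * r ^ 2 + 1))) * u2
      exact sq_ne_of 3 _ 13 (by norm_num) (by norm_num) (by norm_num) hR

lemma ii_100 {p q r v w : ℤ} (h : NumII p q r 0 v 0 w 0) (hv : Sg v) : False := by
  obtain ⟨e1, e3, e4, par, fx, fu, fv, hz1, hy1⟩ := h
  have hw : w = 0 := by linarith
  subst hw
  have hp : p = 0 := by
    have v2 := hv.sq
    linear_combination (-v) * e1 - p * v2
  subst hp
  unfold Fr at e4
  have := par.2 (by linarith)
  norm_num at this

lemma ii_001 {p q r w x1 : ℤ} (h : NumII p q r 0 0 0 w x1) (hx : Sg x1) : False := by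
  obtain ⟨e1, e3, e4, par, fx, fu, fv, hz1, hy1⟩ := h
  have hw : w = x1 := by linarith
  subst hw
  have hr : r = 0 := by
    have : w * r = 0 := by linarith
    rcases mul_eq_zero.1 this with h | h
    · rcases hx with hx | hx <;> omega
    · exact h
  subst hr
  unfold Fr at *
  have w2 := hx.sq
  nlinarith [sq_nonneg (2 * p - w * q)]

lemma ii_000_core_p (P Q W : ℤ) (h1 : P + Q = 2 + W * (2 - W))
    (h2 : P ^ 2 + Q ^ 2 + W ^ 2 - P * Q * W = 4) :
    ¬ (P ^ 2 = 4 ↔ Q ^ 2 = 4) ∨ (P ^ 2 = 1 ∧ Q ^ 2 = 1) := by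
  have hdvd : (W + 2) ∣ 36 := by
    have hd : (W + 2) ∣ (P + Q) ^ 2 := ⟨P * Q - W + 2, by linear_combination h2⟩
    rw [h1] at hd
    have : (36 : ℤ) = (2 + W * (2 - W)) ^ 2 - (W + 2) * ((2 + W * (2 - W) - 6) * (4 - W)) := by
      ring
    rw [this]
    exact dvd_sub hd (Dvd.intro _ rfl)
  have hle : |W + 2| ≤ 36 := Int.le_of_dvd (by norm_num) ((abs_dvd _ _).2 hdvd)
  rw [abs_le] at hle
  have hmod : 36 % (W + 2) = 0 := Int.emod_eq_zero_of_dvd hdvd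
  obtain ⟨n, rfl⟩ : ∃ n : ℕ, W = (n : ℤ) - 38 := ⟨(W + 38).toNat, by omega⟩
  have hfin : ∀ n ∈ List.range 73, 36 % ((n : ℤ) - 38 + 2) = 0 → n ∈ [0, 18, 24, 27, 30, 32, 33, 34, 35, 37, 38, 39, 40, 42, 45, 48, 54, 72] := by
    decide
  have hn := hfin n (List.mem_range.2 (by omega)) hmod
  have hQ : Q = 2 + ((n : ℤ) - 38) * (2 - ((n : ℤ) - 38)) - P := by linarith
  simp only [List.mem_cons, List.not_mem_nil, or_false] at hn
  subst hQ
  clear hle hmod hfin hdvd h1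
  rcases hn with rfl | rfl | rfl | rfl | rfl | rfl | rfl | rfl | rfl | rfl | rfl | rfl | rfl | rfl | rfl | rfl | rfl | rfl <;> norm_num at h2 ⊢
  · exfalso; exact sq_ne_of 1600 (2 * P - (-1518)) 2560520 (by norm_num) (by norm_num) (by norm_num) (by linarith)
  · exfalso; exact sq_ne_of 484 (2 * P - (-438)) 234564 (by norm_num) (by norm_num) (by norm_num) (by linarith)
  · exfalso; exact sq_ne_of 256 (2 * P - (-222)) 65776 (by norm_num) (by norm_num) (by norm_num) (by linarith)
  · exfalso; exact sq_ne_of 169 (2 * P - (-141)) 28769 (by norm_num) (by norm_num) (by norm_num) (by linarith)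
  · exfalso; exact sq_ne_of 100 (2 * P - (-78)) 10180 (by norm_num) (by norm_num) (by norm_num) (by linarith)
  · exfalso; exact sq_ne_of 65 (2 * P - (-46)) 4264 (by norm_num) (by norm_num) (by norm_num) (by linarith)
  · exfalso; exact sq_ne_of 50 (2 * P - (-33)) 2569 (by norm_num) (by norm_num) (by norm_num) (by linarith)
  · exfalso; exact sq_ne_of 38 (2 * P - (-22)) 1476 (by norm_num) (by norm_num) (by norm_num) (by linarith)
  · exfalso; exact sq_ne_of 29 (2 * P - (-13)) 865 (by norm_num) (by norm_num) (by norm_num) (by linarith)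
  · rcases mul_eq_zero.1 (show (P - (1)) * (P - (-2)) = 0 by linarith) with h5 | h5
    · rw [show P = 1 by linarith]; norm_num
    · rw [show P = -2 by linarith]; norm_num
  · rcases mul_eq_zero.1 (show (P - (2)) * (P - (0)) = 0 by linarith) with h5 | h5
    · rw [show P = 2 by linarith]; norm_num
    · rw [show P = 0 by linarith]; norm_num
  · rcases mul_eq_zero.1 (show (P - (2)) * (P - (1)) = 0 by linarith) with h5 | h5
    · rw [show P = 2 by linarith]; norm_num
    · rw [show P = 1 by linarith]; norm_num
  · rcases mul_eq_zero.1 (show (P - (1)) * (P - (1)) = 0 by linarith) with h5 | h5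
    · rw [show P = 1 by linarith]; norm_num
    · rw [show P = 1 by linarith]; norm_num
  · rcases mul_eq_zero.1 (show (P - (-2)) * (P - (-4)) = 0 by linarith) with h5 | h5
    · rw [show P = -2 by linarith]; norm_num
    · rw [show P = -4 by linarith]; norm_num
  · exfalso; exact sq_ne_of 24 (2 * P - (-33)) 585 (by norm_num) (by norm_num) (by norm_num) (by linarith)
  · exfalso; exact sq_ne_of 63 (2 * P - (-78)) 4024 (by norm_num) (by norm_num) (by norm_num) (by linarith)
  · exfalso; exact sq_ne_of 195 (2 * P - (-222)) 38276 (by norm_num) (by norm_num) (by norm_num) (by linarith)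
  · exfalso; exact sq_ne_of 1023 (2 * P - (-1086)) 1048224 (by norm_num) (by norm_num) (by norm_num) (by linarith)

lemma ii_000_core_m (P Q W : ℤ) (h1 : P + Q = 2 + W * (0 - W))
    (h2 : P ^ 2 + Q ^ 2 + W ^ 2 - P * Q * W = 4) :
    ¬ (P ^ 2 = 4 ↔ Q ^ 2 = 4) ∨ (P ^ 2 = 1 ∧ Q ^ 2 = 1) := by
  have hdvd : (W + 2) ∣ 4 := by
    have hd : (W + 2) ∣ (P + Q) ^ 2 := ⟨P * Q - W + 2, by linear_combination h2⟩
    rw [h1] at hd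
    have : (4 : ℤ) = (2 + W * (0 - W)) ^ 2 - (W + 2) * ((2 + W * (0 - W) - 2) * (2 - W)) := by
      ring
    rw [this]
    exact dvd_sub hd (Dvd.intro _ rfl)
  have hle : |W + 2| ≤ 4 := Int.le_of_dvd (by norm_num) ((abs_dvd _ _).2 hdvd)
  rw [abs_le] at hle
  have hmod : 4 % (W + 2) = 0 := Int.emod_eq_zero_of_dvd hdvd
  obtain ⟨n, rfl⟩ : ∃ n : ℕ, W = (n : ℤ) - 6 := ⟨(W + 6).toNat, by omega⟩
  have hfin : ∀ n ∈ List.range 9, 4 % ((n : ℤ) - 6 + 2) = 0 → n ∈ [0, 2, 3, 5, 6, 8] := by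
    decide
  have hn := hfin n (List.mem_range.2 (by omega)) hmod
  have hQ : Q = 2 + ((n : ℤ) - 6) * (0 - ((n : ℤ) - 6)) - P := by linarith
  simp only [List.mem_cons, List.not_mem_nil, or_false] at hn
  subst hQ
  clear hle hmod hfin hdvd h1
  rcases hn with rfl | rfl | rfl | rfl | rfl | rfl <;> norm_num at h2 ⊢
  · exfalso; exact sq_ne_of 48 (2 * P - (-34)) 2344 (by norm_num) (by norm_num) (by norm_num) (by linarith)
  · exfalso; exact sq_ne_of 24 (2 * P - (-14)) 612 (by norm_num) (by norm_num) (by norm_num) (by linarith)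
  · exfalso; exact sq_ne_of 16 (2 * P - (-7)) 265 (by norm_num) (by norm_num) (by norm_num) (by linarith)
  · rcases mul_eq_zero.1 (show (P - (2)) * (P - (-1)) = 0 by linarith) with h5 | h5
    · rw [show P = 2 by linarith]; norm_num
    · rw [show P = -1 by linarith]; norm_num
  · rcases mul_eq_zero.1 (show (P - (2)) * (P - (0)) = 0 by linarith) with h5 | h5
    · rw [show P = 2 by linarith]; norm_num
    · rw [show P = 0 by linarith]; norm_num
  · rcases mul_eq_zero.1 (show (P - (-1)) * (P - (-1)) = 0 by linarith) with h5 | h5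
    · rw [show P = -1 by linarith]; norm_num
    · rw [show P = -1 by linarith]; norm_num

lemma ii_000_core (P Q W e : ℤ) (he : Sg e) (h1 : P + Q = 2 + W * (e + 1 - W))
    (h2 : P ^ 2 + Q ^ 2 + W ^ 2 - P * Q * W = 4) :
    ¬ (P ^ 2 = 4 ↔ Q ^ 2 = 4) ∨ (P ^ 2 = 1 ∧ Q ^ 2 = 1) := by
  rcases he with rfl | rfl
  · exact ii_000_core_p P Q W (by linarith) h2
  · exact ii_000_core_m P Q W (by linarith) h2

lemma ii_000 {p q r u v t w x1 : ℤ} (h : NumII p q r u v t w x1) (hu : Sg u) (hv : Sg v)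
    (ht : Sg t) (hx : Sg x1) : False := by
  obtain ⟨e1, e3, e4, par, fx, fu, fv, hz1, hy1⟩ := h
  have u2 := hu.sq'
  have v2 := hv.sq'
  have t2 := ht.sq'
  have hP : (t * p * v) ^ 2 = p ^ 2 := by
    rw [mul_pow, mul_pow, t2, v2]; ring
  have hQ : (t * q * u) ^ 2 = q ^ 2 := by
    rw [mul_pow, mul_pow, t2, u2]; ring
  have := ii_000_core (t * p * v) (t * q * u) (u * v * w) (u * v * x1) ((hu.mul hv).mul hx)
    (by
      have hw : r = t * (x1 + u * v - w) := by
        linear_combination t * e3 - r * t2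
      rw [hw] at e1
      linear_combination (-t) * e1 + (w * (x1 + u * v - w) + 2) * t2
        - w * (x1 - w) * (v ^ 2 * u2 + v2))
    (by
      unfold Fr at e4
      rw [hP, hQ]
      linear_combination e4 + w ^ 2 * (v ^ 2 * u2 + v2)
        - p * q * w * (t ^ 2 * u ^ 2 * v2 + t ^ 2 * u2 + t2))
  rw [hP, hQ] at this
  rcases this with h | ⟨h1, h2⟩
  · exact h par
  · have := small_pair p q x1 hx fx
    rcases sg_of h1 with rfl | rfl <;> rcases sg_of h2 with rfl | rfl <;> simp at this

end HB
/-! ## Part 6: the parity character of `SL(2, ℤ)` -/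

namespace HB

lemma chi_aux : ∀ a b c d a' b' c' d' : ZMod 2, a * d - b * c = 1 → a' * d' - b' * c' = 1 →
    (a * b' + b * d') + (c * a' + d * c') + (1 + (a * a' + b * c')) * (1 + (c * b' + d * d')) =
    (b + c + (1 + a) * (1 + d)) + (b' + c' + (1 + a') * (1 + d')) := by decide

/-- The sign of the image of a matrix in `SL(2, 𝔽₂) = S₃`. -/
def chi (X : SL) : ZMod 2 :=
  (X.1 0 1 : ZMod 2) + (X.1 1 0 : ZMod 2) + (1 + (X.1 0 0 : ZMod 2)) * (1 + (X.1 1 1 : ZMod 2))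

lemma chi_mul (X Y : SL) : chi (X * Y) = chi X + chi Y := by
  have hx := congrArg (Int.cast : ℤ → ZMod 2) (det_eq X)
  have hy := congrArg (Int.cast : ℤ → ZMod 2) (det_eq Y)
  push_cast at hx hy
  have := chi_aux _ _ _ _ _ _ _ _ hx hy
  simp only [chi, mul00, mul01, mul10, mul11]
  push_cast
  exact this

lemma chi_inv (X : SL) : chi X⁻¹ = chi X := by
  simp only [chi, inv00, inv01, inv10, inv11]
  push_cast
  generalize (X.1 0 0 : ZMod 2) = a
  generalize (X.1 0 1 : ZMod 2) = b
  generalize (X.1 1 0 : ZMod 2) = c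
  generalize (X.1 1 1 : ZMod 2) = d
  revert a b c d
  decide

lemma zmod2_cases (x : ZMod 2) : x = 0 ∨ x = 1 := by revert x; decide

lemma chi_conj (X Y : SL) : chi (Y⁻¹ * X * Y) = chi X := by
  rw [chi_mul, chi_mul, chi_inv]
  generalize chi X = a
  generalize chi Y = b
  revert a b
  decide

lemma chi_conj' (X Y : SL) : chi (Y * X * Y⁻¹) = chi X := by
  rw [chi_mul, chi_mul, chi_inv]
  generalize chi X = a
  generalize chi Y = b
  revert a b
  decide

lemma chi_odd_aux : ∀ a b c d : ZMod 2, a * d - b * c = 1 → a + d = 1 →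
    b + c + (1 + a) * (1 + d) = 0 := by decide

lemma chi_sg (X : SL) (h : Sg (tr X)) : chi X = 0 := by
  have hx := congrArg (Int.cast : ℤ → ZMod 2) (det_eq X)
  push_cast at hx
  have ht : (X.1 0 0 : ZMod 2) + (X.1 1 1 : ZMod 2) = 1 := by
    have : ((tr X : ℤ) : ZMod 2) = 1 := by rcases h with h | h <;> rw [h] <;> decide
    rw [← this, tr]; push_cast; rfl
  exact chi_odd_aux _ _ _ _ hx ht

lemma chi_zero (X : SL) (h : tr X = 0) : chi X = 1 := by
  have hd := det_eq X
  have h11 : X.1 1 1 = -X.1 0 0 := by unfold tr at h; linarith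
  unfold chi
  rw [h11] at hd ⊢
  generalize X.1 0 0 = a at *
  generalize X.1 0 1 = b at *
  generalize X.1 1 0 = c at *
  have key : (b + c + (1 + a) * (1 + -a)) % 2 = 1 := by
    obtain ⟨k, rfl | rfl⟩ : ∃ k, a = 2 * k ∨ a = 2 * k + 1 := ⟨a / 2, by omega⟩ <;>
    obtain ⟨l, rfl | rfl⟩ : ∃ k, b = 2 * k ∨ b = 2 * k + 1 := ⟨b / 2, by omega⟩ <;>
    obtain ⟨m, rfl | rfl⟩ : ∃ k, c = 2 * k ∨ c = 2 * k + 1 := ⟨c / 2, by omega⟩ <;>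
    ring_nf at hd ⊢ <;> omega
  have := (ZMod.intCast_eq_intCast_iff (b + c + (1 + a) * (1 + -a)) 1 2).2 key
  push_cast at this ⊢
  exact this

lemma abs_le_one {x : ℤ} (h : |x| ≤ 1) : x = 0 ∨ Sg x := by
  rw [abs_le] at h
  unfold Sg
  omega

lemma chi_dich (X : SL) (h : |tr X| ≤ 1) :
    (chi X = 1 ∧ tr X = 0) ∨ (chi X = 0 ∧ Sg (tr X)) := by
  rcases abs_le_one h with h | h
  · exact Or.inl ⟨chi_zero X h, h⟩
  · exact Or.inr ⟨chi_sg X h, h⟩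

/-- The trace condition obtained from the value of the character. -/
lemma tr_zero_of {X : SL} (h : |tr X| ≤ 1) (hc : chi X = 1) : tr X = 0 := by
  rcases chi_dich X h with h | h
  · exact h.2
  · rw [h.1] at hc; exact absurd hc (by decide)

lemma tr_sg_of {X : SL} (h : |tr X| ≤ 1) (hc : chi X = 0) : Sg (tr X) := by
  rcases chi_dich X h with h | h
  · rw [h.1] at hc; exact absurd hc (by decide)
  · exact h.2

end HB
/-! ## Part 7: there is always a commuting pair -/

namespace HB

lemma Pair.abs {A B : SL} (h : Pair A B) (hne : A * B ≠ B * A) :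
    |tr (A * B)| ≤ 1 ∧ 4 < Fr (tr A) (tr B) (tr (A * B)) := by
  rcases h with h | h
  · exact absurd h.1 hne
  · exact h.2

lemma fr_small {p q x : ℤ} (hp : |p| ≤ 1) (hq : |q| ≤ 1) (hx : |x| ≤ 1) : Fr p q x ≤ 4 := by
  unfold Fr
  rcases abs_le_one hp with rfl | rfl | rfl <;> rcases abs_le_one hq with rfl | rfl | rfl <;>
  rcases abs_le_one hx with rfl | rfl | rfl <;> norm_num

lemma tr_neg (X : SL) : tr (-X) = - tr X := by
  simp [tr]; ring

lemma abs_tr_of_scal {X Y : SL} (h : Scal (X * Y)) : |tr X| = |tr Y| := by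
  rcases scal_one_or h with h | h
  · rw [eq_inv_of_mul_eq_one_left h, tr_inv]
  · have : X = - Y⁻¹ := by
      have := congrArg (fun Z => Z * Y⁻¹) h
      simpa using this
    rw [this, tr_neg, abs_neg, tr_inv]

lemma caseI {O : Set (SL × SL × SL)} (hO : Closed O)
    (hno : ∀ A B C, (A, B, C) ∈ O → A * B ≠ B * A) (A B C : SL) (h : (A, B, C) ∈ O) : False := by
  have n01 : ∀ A B C, (A, B, C) ∈ O → |tr (A * B)| ≤ 1 ∧ 4 < Fr (tr A) (tr B) (tr (A * B)) :=
    fun A B C h => (hO.pair01 h).abs (hno A B C h)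
  have n12 : ∀ A B C, (A, B, C) ∈ O → |tr (B * C)| ≤ 1 ∧ 4 < Fr (tr B) (tr C) (tr (B * C)) :=
    fun A B C h => n01 _ _ _ (hO.rot _ _ _ h)
  have n02 : ∀ A B C, (A, B, C) ∈ O → |tr (A * C)| ≤ 1 ∧ 4 < Fr (tr A) (tr C) (tr (A * C)) :=
    fun A B C h => n01 _ _ _ (hO.m1 _ _ _ h)
  obtain ⟨ax, fx⟩ := n01 _ _ _ h
  obtain ⟨ay, fy⟩ := n12 _ _ _ h
  obtain ⟨az, fz⟩ := n02 _ _ _ h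
  obtain ⟨ax', -⟩ := n02 _ _ _ (hO.m1 _ _ _ h)
  obtain ⟨ay', -⟩ := n02 _ _ _ (hO.m0' _ _ _ h)
  obtain ⟨az', -⟩ := n12 _ _ _ (hO.m0 _ _ _ h)
  have aT : |tr (A * B * C)| ≤ 1 := by
    rcases hO.ellT h with hT | ⟨hA, hB, hC⟩
    · exact hT
    · exfalso
      by_cases hs : Scal (A * B * C)
      · have hq : |tr (B⁻¹ * (A * B * C))| ≤ 1 := by
          rw [show B⁻¹ * (A * B * C) = B⁻¹ * A * B * C by group]; exact az'
        have hq2 : |tr B| ≤ 1 := by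
          rcases scal_one_or hs with e | e
          · rwa [e, mul_one, tr_inv] at hq
          · rwa [e, mul_neg, mul_one, tr_neg, abs_neg, tr_inv] at hq
        have hp : |tr A| ≤ 1 := by
          rw [mul_assoc] at hs
          rw [abs_tr_of_scal hs]; exact ay
        exact absurd fx (not_lt.2 (fr_small hp hq2 ax))
      · exact hno A B C h (comm_trans hs hA hB)
  have hx' := tr_x' A B C
  have hy' := tr_y' A B C
  have hz' := tr_z' A B C
  have hF := tr_fricke A B C
  have cx : chi (A * (C⁻¹ * B * C)) = chi (A * B) := by rw [chi_mul, chi_conj, chi_mul]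
  have cy : chi (A * B * A⁻¹ * C) = chi (B * C) := by rw [chi_mul, chi_conj', chi_mul]
  have cz : chi (B⁻¹ * A * B * C) = chi (A * C) := by rw [chi_mul, chi_conj, chi_mul]
  have ht := abs_le_one aT
  have csum : chi (A * B) + chi (B * C) + chi (A * C) = 0 := by
    rw [chi_mul, chi_mul, chi_mul]
    generalize chi A = a
    generalize chi B = b
    generalize chi C = c
    revert a b c
    decide
  have z2 : ∀ {X Y : SL}, |tr Y| ≤ 1 → chi X = 1 → chi Y = chi X → tr Y = 0 :=
    fun hY h e => tr_zero_of hY (e.trans h)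
  have s2 : ∀ {X Y : SL}, |tr Y| ≤ 1 → chi X = 0 → chi Y = chi X → Sg (tr Y) :=
    fun hY h e => tr_sg_of hY (e.trans h)
  rcases zmod2_cases (chi (A * B)) with x1 | x1 <;>
  rcases zmod2_cases (chi (B * C)) with y1 | y1 <;>
  rcases zmod2_cases (chi (A * C)) with z1 | z1 <;>
  rw [x1, y1, z1] at csum <;> try exact absurd csum (by decide)
  · exact caseI_none _ _ _ _ _ _ _ _ _ _ ht (tr_sg_of ax x1) (tr_sg_of ay y1) (tr_sg_of az z1)
      (s2 ax' x1 cx) (s2 ay' y1 cy) (s2 az' z1 cz) hx' hy' hz' (by linarith) fx fy fz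
  · have ey := tr_zero_of ay y1
    have ez := tr_zero_of az z1
    rw [z2 ay' y1 cy] at hy'
    rw [z2 az' z1 cz] at hz'
    simp only [ey, ez] at hx' hy' hz' hF fy fz
    exact caseI_two (tr A) (tr C) (tr B) _ _ _ ht (tr_sg_of ax x1) (s2 ax' x1 cx)
      (by linarith) (by linarith) (by linarith) (by linarith) fz (by unfold Fr at *; linarith) fx
  · have ex := tr_zero_of ax x1
    have ez := tr_zero_of az z1
    rw [z2 ax' x1 cx] at hx'
    rw [z2 az' z1 cz] at hz'
    simp only [ex, ez] at hx' hy' hz' hF fx fz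
    exact caseI_two (tr B) (tr A) (tr C) _ _ _ ht (tr_sg_of ay y1) (s2 ay' y1 cy)
      (by linarith) (by linarith) (by linarith) (by linarith) (by unfold Fr at *; linarith) fz fy
  · have ex := tr_zero_of ax x1
    have ey := tr_zero_of ay y1
    rw [z2 ax' x1 cx] at hx'
    rw [z2 ay' y1 cy] at hy'
    simp only [ex, ey] at hx' hy' hz' hF fx fy
    exact caseI_two (tr A) (tr B) (tr C) _ _ _ ht (tr_sg_of az z1) (s2 az' z1 cz)
      (by linarith) (by linarith) (by linarith) (by linarith) fx fy fz

end HB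
/-! ## Part 9: explicit finite orbits -/

namespace HB

section models
variable {G : Type*} [Group G]

/-- A triple lying in an explicit list, of length at most `27`, closed under the moves. -/
def Good (a b c : G) : Prop := ∃ L : List (G × G × G), L.length ≤ 27 ∧ (a, b, c) ∈ L ∧
  (∀ a b c, (a, b, c) ∈ L → (b, b⁻¹ * a * b, c) ∈ L) ∧
  (∀ a b c, (a, b, c) ∈ L → (a, c, c⁻¹ * b * c) ∈ L)

/-- Transporting a computation with words to a group. -/
lemma good_of_model {W : Type*} (m : W → W → W) (iv : W → W) (ev : W → G)
    (hm : ∀ x y, ev (m x y) = ev x * ev y) (hi : ∀ x, ev (iv x) = (ev x)⁻¹)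
    (L : List (W × W × W)) (hlen : L.length ≤ 27)
    (hL : ∀ t ∈ L, (t.2.1, m (m (iv t.2.1) t.1) t.2.1, t.2.2) ∈ L ∧
      (t.1, t.2.2, m (m (iv t.2.2) t.2.1) t.2.2) ∈ L)
    (x y z : W) (h : (x, y, z) ∈ L) : Good (ev x) (ev y) (ev z) := by
  refine ⟨L.map (fun t => (ev t.1, ev t.2.1, ev t.2.2)), by simpa using hlen,
    List.mem_map.2 ⟨_, h, rfl⟩, ?_, ?_⟩
  · intro a b c hmem
    obtain ⟨t, ht, he⟩ := List.mem_map.1 hmem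
    simp only [Prod.mk.injEq] at he
    obtain ⟨rfl, rfl, rfl⟩ := he
    refine List.mem_map.2 ⟨_, (hL t ht).1, ?_⟩
    simp only [hm, hi]
  · intro a b c hmem
    obtain ⟨t, ht, he⟩ := List.mem_map.1 hmem
    simp only [Prod.mk.injEq] at he
    obtain ⟨rfl, rfl, rfl⟩ := he
    refine List.mem_map.2 ⟨_, (hL t ht).2, ?_⟩
    simp only [hm, hi]

/-! Words in the free product of cyclic groups of orders two and three. -/

/-- Prepending a letter, with reduction. -/
def consW (i : Fin 3) : List (Fin 3) → List (Fin 3)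
  | [] => [i]
  | j :: l =>
    if i = 0 ∧ j = 0 then l
    else if i = 1 ∧ j = 1 then 2 :: l
    else if i = 1 ∧ j = 2 then l
    else if i = 2 ∧ j = 1 then l
    else if i = 2 ∧ j = 2 then 1 :: l
    else i :: j :: l

/-- Product of words. -/
def mulW (w v : List (Fin 3)) : List (Fin 3) := w.foldr consW v

/-- Inverse of a word. -/
def invW (w : List (Fin 3)) : List (Fin 3) := (w.map (fun i => -i)).reverse

/-- The element attached to a letter. -/
def letW (S U : G) (i : Fin 3) : G := if i = 0 then S else if i = 1 then U else U⁻¹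

/-- The element attached to a word. -/
def evW (S U : G) (w : List (Fin 3)) : G := (w.map (letW S U)).prod

lemma ev_cons {S U : G} (hS : S * S = 1) (hU : U * U * U = 1) (i : Fin 3) (l : List (Fin 3)) :
    evW S U (consW i l) = letW S U i * evW S U l := by
  have hU2 : U⁻¹ = U * U := by rw [inv_eq_iff_mul_eq_one, ← mul_assoc, hU]
  have hU3 : U⁻¹ * U⁻¹ = U := by
    nth_rewrite 1 [hU2]; group
  cases l with
  | nil => simp [consW, evW]
  | cons j l =>
    fin_cases i <;> fin_cases j <;>
      simp [consW, evW, letW, ← mul_assoc, hS, hU3, hU2.symm]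

lemma ev_mul {S U : G} (hS : S * S = 1) (hU : U * U * U = 1) (w v : List (Fin 3)) :
    evW S U (mulW w v) = evW S U w * evW S U v := by
  induction w with
  | nil => simp [mulW, evW]
  | cons i w ih =>
    have : mulW (i :: w) v = consW i (mulW w v) := rfl
    rw [this, ev_cons hS hU, ih, ← mul_assoc]
    rfl

lemma ev_inv {S U : G} (hS : S * S = 1) (w : List (Fin 3)) :
    evW S U (invW w) = (evW S U w)⁻¹ := by
  have hl : ∀ i, letW S U (-i) = (letW S U i)⁻¹ := by
    intro i
    have hS' : S⁻¹ = S := by rw [inv_eq_iff_mul_eq_one, hS]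
    fin_cases i
    · simpa [letW] using hS'.symm
    · have : (-1 : Fin 3) = 2 := rfl
      simp [letW, this]
    · have : (-2 : Fin 3) = 1 := rfl
      simp [letW, this]
  induction w with
  | nil => simp [invW, evW]
  | cons i w ih =>
    unfold evW invW at *
    simp only [List.map_cons, List.reverse_cons, List.map_append, List.prod_append, ih,
      List.prod_cons, List.map_nil, List.prod_nil, mul_one, mul_inv_rev, hl]

/-! Words in the generalized dihedral group of `ℤ²`. -/

/-- Product in the generalized dihedral group. -/
def mulD (x y : ℤ × ℤ × Bool) : ℤ × ℤ × Bool :=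
  if x.2.2 then (x.1 - y.1, x.2.1 - y.2.1, !y.2.2) else (x.1 + y.1, x.2.1 + y.2.1, y.2.2)

/-- Inverse in the generalized dihedral group. -/
def invD (x : ℤ × ℤ × Bool) : ℤ × ℤ × Bool := if x.2.2 then x else (-x.1, -x.2.1, false)

/-- Evaluation of a dihedral word. -/
def evD (a b c : G) (x : ℤ × ℤ × Bool) : G := a ^ x.1 * b ^ x.2.1 * (if x.2.2 then c else 1)

lemma evD_mul {a b c : G} (hab : a * b = b * a) (hc : c * c = 1) (ha : c * a * c = a⁻¹)
    (hb : c * b * c = b⁻¹) (x y : ℤ × ℤ × Bool) :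
    evD a b c (mulD x y) = evD a b c x * evD a b c y := by
  have hc' : c⁻¹ = c := by rw [inv_eq_iff_mul_eq_one, hc]
  have conj : ∀ g : G, c * g * c = g⁻¹ → ∀ n : ℤ, c * g ^ n = g ^ (-n) * c := by
    intro g hg n
    have h1 : (c * g * c⁻¹) ^ n = c * g ^ n * c⁻¹ := conj_zpow
    rw [hc', hg, inv_zpow, ← zpow_neg] at h1
    rw [h1, mul_assoc, hc, mul_one]
  have ca := conj a ha
  have cb := conj b hb
  have cab : ∀ m n : ℤ, b ^ m * a ^ n = a ^ n * b ^ m :=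
    fun m n => ((Commute.zpow_zpow (show Commute a b from hab)) n m).eq.symm
  obtain ⟨i, j, e⟩ := x
  obtain ⟨k, l, f⟩ := y
  have main : ∀ z : G, a ^ i * b ^ j * c * (a ^ k * b ^ l * z) = a ^ (i - k) * b ^ (j - l) * (c * z) := by
    intro z
    calc a ^ i * b ^ j * c * (a ^ k * b ^ l * z) = a ^ i * b ^ j * (c * a ^ k) * b ^ l * z := by group
      _ = a ^ i * (b ^ j * a ^ (-k)) * (c * b ^ l) * z := by rw [ca]; group
      _ = a ^ (i - k) * b ^ (j - l) * (c * z) := by rw [cb, cab, sub_eq_add_neg, sub_eq_add_neg, zpow_add, zpow_add]; group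
  cases e
  · simp only [mulD, evD, Bool.false_eq_true, if_false, mul_one]
    rw [zpow_add, zpow_add]
    calc a ^ i * a ^ k * (b ^ j * b ^ l) * (if f = true then c else 1)
        = a ^ i * (a ^ k * b ^ j) * b ^ l * (if f = true then c else 1) := by group
      _ = _ := by rw [← cab]; group
  · simp only [mulD, evD, if_true]
    rw [main]
    cases f <;> simp [hc]

lemma evD_inv {a b c : G} (hab : a * b = b * a) (hc : c * c = 1) (ha : c * a * c = a⁻¹)
    (hb : c * b * c = b⁻¹) (x : ℤ × ℤ × Bool) :
    evD a b c (invD x) = (evD a b c x)⁻¹ := by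
  rw [eq_inv_iff_mul_eq_one, ← evD_mul hab hc ha hb]
  obtain ⟨i, j, e⟩ := x
  cases e <;> simp [invD, mulD, evD]

/-- The orbit of size 8. -/
def orb48 : List (List (Fin 3) × List (Fin 3) × List (Fin 3)) := [
  ([0,2], [0,2], [1,0,1]),
  ([0,2], [1,0,1], [2,0]),
  ([1,0,1], [2,0], [2,0]),
  ([0,2], [2,0], [0,2]),
  ([2,0], [0,2], [2,0]),
  ([2,0], [0,1,0,1,0], [0,2]),
  ([2,0], [2,0], [0,1,0,1,0]),
  ([0,1,0,1,0], [0,2], [0,2])]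

/-- The orbit of size 18. -/
def orb36 : List (List (Fin 3) × List (Fin 3) × List (Fin 3)) := [
  ([0,2], [0,2], [1]),
  ([0,2], [1], [2,0]),
  ([1], [2,0], [2,0]),
  ([0,2], [2,0], [0,1,0]),
  ([2,0], [0,1,0], [2,0]),
  ([2,0], [0,1,0,1,0], [0,1,0]),
  ([0,2], [0,1,0], [0,2]),
  ([0,1,0], [0,2], [2,0]),
  ([2,0], [2,0], [0,1,0,1,0,2,0]),
  ([0,1,0,1,0], [0,2], [0,1,0]),
  ([0,1,0], [0,1,0,1,0], [0,2]),
  ([0,1,0], [2,0], [0,1,0,1,0]),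
  ([2,0], [0,1,0,1,0,2,0], [0,1,0,1,0]),
  ([0,1,0,1,0], [0,1,0], [0,1,0,1,0]),
  ([0,1,0,1,0], [0,2,0,1,0,1,0], [0,2]),
  ([0,1,0,1,0,2,0], [0,1,0,1,0], [0,1,0,1,0]),
  ([0,1,0,1,0], [0,1,0,1,0], [0,2,0,1,0,1,0]),
  ([0,2,0,1,0,1,0], [0,2], [0,2])]

/-- The orbit of size 27. -/
def orb54 : List (List (Fin 3) × List (Fin 3) × List (Fin 3)) := [
  ([0,2], [0,2,0,2], [1,0,1]),
  ([0,2,0,2], [0,2], [1,0,1]),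
  ([0,2], [1,0,1], [2,0,2,0]),
  ([0,2,0,2], [1,0,1], [2,0]),
  ([1,0,1], [2,0], [2,0,2,0]),
  ([0,2], [2,0,2,0], [0,1,0,1,0]),
  ([1,0,1], [2,0,2,0], [2,0]),
  ([0,2,0,2], [2,0], [0,2]),
  ([2,0], [0,2], [2,0,2,0]),
  ([2,0,2,0], [0,1,0,1,0,1,0,2,0], [0,1,0,1,0]),
  ([0,2], [0,1,0,1,0], [0,2,0,2]),
  ([2,0,2,0], [0,1,0,1,0], [2,0]),
  ([2,0], [0,1,0,2,0,1,0], [0,2]),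
  ([2,0], [2,0,2,0], [0,1,0,1,0,1,0,2,0]),
  ([0,1,0,1,0,1,0,2,0], [0,1,0,2,0,1,0], [0,1,0,1,0]),
  ([0,1,0,1,0], [0,2,0,1,0,1,0,1,0], [0,2,0,2]),
  ([0,1,0,1,0], [0,2,0,2], [2,0]),
  ([2,0,2,0], [2,0], [0,1,0,1,0,1,0,2,0]),
  ([0,1,0,2,0,1,0], [0,2,0,1,0,1,0,1,0], [0,2]),
  ([2,0], [0,1,0,1,0,1,0,2,0], [0,1,0,2,0,1,0]),
  ([0,1,0,2,0,1,0], [0,2], [0,1,0,1,0]),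
  ([0,1,0,1,0,1,0,2,0], [0,1,0,1,0], [0,1,0,2,0,1,0]),
  ([0,2,0,1,0,1,0,1,0], [0,2], [0,2,0,2]),
  ([0,1,0,1,0], [2,0], [0,1,0,2,0,1,0]),
  ([0,2,0,1,0,1,0,1,0], [0,2,0,2], [0,2]),
  ([0,1,0,2,0,1,0], [0,1,0,1,0], [0,2,0,1,0,1,0,1,0]),
  ([0,1,0,1,0], [0,1,0,2,0,1,0], [0,2,0,1,0,1,0,1,0])]

/-- The orbit of size 24. -/
def orbD : List ((ℤ × ℤ × Bool) × (ℤ × ℤ × Bool) × (ℤ × ℤ × Bool)) := [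
  ((1,0,false), (0,1,false), (0,0,true)),
  ((0,1,false), (1,0,false), (0,0,true)),
  ((1,0,false), (0,0,true), (0,-1,false)),
  ((0,1,false), (0,0,true), (-1,0,false)),
  ((0,0,true), (-1,0,false), (0,-1,false)),
  ((1,0,false), (0,-1,false), (0,2,true)),
  ((0,0,true), (0,-1,false), (-1,0,false)),
  ((0,1,false), (-1,0,false), (2,0,true)),
  ((-1,0,false), (2,0,true), (0,-1,false)),
  ((0,-1,false), (1,0,false), (0,2,true)),
  ((1,0,false), (0,2,true), (0,1,false)),
  ((0,-1,false), (0,2,true), (-1,0,false)),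
  ((-1,0,false), (0,1,false), (2,0,true)),
  ((0,1,false), (2,0,true), (1,0,false)),
  ((2,0,true), (1,0,false), (0,-1,false)),
  ((-1,0,false), (0,-1,false), (2,2,true)),
  ((0,2,true), (-1,0,false), (0,1,false)),
  ((0,2,true), (0,1,false), (-1,0,false)),
  ((0,-1,false), (-1,0,false), (2,2,true)),
  ((2,0,true), (0,-1,false), (1,0,false)),
  ((-1,0,false), (2,2,true), (0,1,false)),
  ((0,-1,false), (2,2,true), (1,0,false)),
  ((2,2,true), (1,0,false), (0,1,false)),
  ((2,2,true), (0,1,false), (1,0,false))]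

lemma good48 {S U : G} (hS : S * S = 1) (hU : U * U * U = 1) :
    Good (S * U⁻¹) (S * U⁻¹) (U * S * U) := by
  have := good_of_model mulW invW (evW S U) (ev_mul hS hU) (ev_inv hS) orb48 (by decide)
    (by decide +kernel) [0, 2] [0, 2] [1, 0, 1] (by decide)
  simpa [evW, letW, mul_assoc] using this

lemma good36 {S U : G} (hS : S * S = 1) (hU : U * U * U = 1) :
    Good (S * U⁻¹) (S * U⁻¹) U := by
  have := good_of_model mulW invW (evW S U) (ev_mul hS hU) (ev_inv hS) orb36 (by decide)
    (by decide +kernel) [0, 2] [0, 2] [1] (by decide)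
  simpa [evW, letW, mul_assoc] using this

lemma good54 {S U : G} (hS : S * S = 1) (hU : U * U * U = 1) :
    Good (S * U⁻¹) (S * U⁻¹ * (S * U⁻¹)) (U * S * U) := by
  have := good_of_model mulW invW (evW S U) (ev_mul hS hU) (ev_inv hS) orb54 (by decide)
    (by decide +kernel) [0, 2] [0, 2, 0, 2] [1, 0, 1] (by decide)
  simpa [evW, letW, mul_assoc] using this

lemma goodD {a b c : G} (hab : a * b = b * a) (hc : c * c = 1) (ha : c * a * c = a⁻¹)
    (hb : c * b * c = b⁻¹) : Good a b c := by
  have := good_of_model mulD invD (evD a b c) (evD_mul hab hc ha hb) (evD_inv hab hc ha hb) orbD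
    (by decide) (by decide +kernel) (1, 0, false) (0, 1, false) (0, 0, true) (by decide)
  simpa [evD] using this

end models

end HB
/-! ## Part 8: the case of a commuting pair -/

set_option linter.unusedSimpArgs false

namespace HB

lemma sq_of_tr {X : SL} (h : tr X = 0) : X * X = -1 := by
  have hd := det_eq X
  have h11 : X.1 1 1 = -X.1 0 0 := by unfold tr at h; linarith
  rw [h11] at hd
  apply sl_ext
  · rw [mul00]; simp; linarith
  · rw [mul01, h11]; simp; ring
  · rw [mul10, h11]; simp; ring
  · rw [mul11, h11]; simp; linarith

lemma pr_sq {X : SL} (h : tr X = 0) : pr X * pr X = 1 := by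
  rw [← map_mul, pr_one_iff]
  exact Or.inr (sq_of_tr h)

lemma cube_of_tr {X : SL} (h : Sg (tr X)) : X * X * X = 1 ∨ X * X * X = -1 := by
  have hd := det_eq X
  rcases h with h | h
  · right
    have h11 : X.1 1 1 = 1 - X.1 0 0 := by unfold tr at h; linarith
    rw [h11] at hd
    apply sl_ext
    · simp only [mul00, mul01, mul10, mul11, h11]; simp; linear_combination (-X.1 0 0 - 1) * hd
    · simp only [mul00, mul01, mul10, mul11, h11]; simp; linear_combination (-X.1 0 1) * hd
    · simp only [mul00, mul01, mul10, mul11, h11]; simp; linear_combination (-X.1 1 0) * hd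
    · simp only [mul00, mul01, mul10, mul11, h11]; simp; linear_combination (X.1 0 0 - 2) * hd
  · left
    have h11 : X.1 1 1 = -1 - X.1 0 0 := by unfold tr at h; linarith
    rw [h11] at hd
    apply sl_ext
    · simp only [mul00, mul01, mul10, mul11, h11]; simp; linear_combination (-X.1 0 0 + 1) * hd
    · simp only [mul00, mul01, mul10, mul11, h11]; simp; linear_combination (-X.1 0 1) * hd
    · simp only [mul00, mul01, mul10, mul11, h11]; simp; linear_combination (-X.1 1 0) * hd
    · simp only [mul00, mul01, mul10, mul11, h11]; simp; linear_combination (X.1 0 0 + 2) * hd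

lemma pr_cube {X : SL} (h : Sg (tr X)) : pr X * pr X * pr X = 1 := by
  rw [← map_mul, ← map_mul, pr_one_iff]
  exact cube_of_tr h

/-- Two matrices with the same traces against an elliptic matrix coincide up to sign. -/
lemma eq_of_definite (E X Y : SL) (e : ℤ) (he : Sg e) (hE : |tr E| ≤ 1) (ht : tr X = e * tr Y)
    (hw : tr (X * Y⁻¹) = 2 * e) (hEX : tr (E * X) = e * tr (E * Y)) : pr X = pr Y := by
  have e2 := he.sq
  have hx := det_eq X
  have hy := det_eq Y
  simp only [tr, mul00, mul11, inv00, inv01, inv10, inv11] at ht hw hEX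
  have h := definite E hE (X.1 0 0 - e * Y.1 0 0) (X.1 0 1 - e * Y.1 0 1) (X.1 1 0 - e * Y.1 1 0)
    (by linear_combination hEX - E.1 1 1 * ht)
  have h0 : (X.1 0 0 - e * Y.1 0 0) ^ 2 + (X.1 0 1 - e * Y.1 0 1) * (X.1 1 0 - e * Y.1 1 0) = 0 := by
    linear_combination (X.1 0 0 - e * Y.1 0 0) * ht + e * hw - hx - e ^ 2 * hy + e2
  obtain ⟨m1, m2, m3⟩ := h.2 h0
  apply pr_eq_of
  rcases he with rfl | rfl
  · left; apply sl_ext <;> linarith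
  · right; apply sl_ext <;> simp <;> linarith

lemma tr_sq_mul (X Y : SL) : tr (X * X * Y) = tr X * tr (X * Y) - tr Y := by
  have hd := det_eq X
  simp only [tr, mul00, mul01, mul10, mul11]
  linear_combination (-Y.1 0 0 - Y.1 1 1) * hd

lemma tr_comm_conj (B C : SL) : tr (C⁻¹ * B * C * B⁻¹) =
    Fr (tr B) (tr C) (tr (B * C)) - 2 := by
  have h1 := tr_mul_inv (C⁻¹ * B * C) B
  have h2 := tr_mul_comm (C⁻¹ * B * C) B
  have h3 := tr_x' B B C
  have h4 := tr_sq_mul B C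
  have h5 := tr_sq_mul B 1
  simp only [mul_one, tr_one] at h5
  rw [h1, h2, h3, h4, h5, tr_conj]
  unfold Fr
  ring

lemma inv_of_conj (B C : SL) (hF : 4 < Fr (tr B) (tr C) (tr (B * C)))
    (hc : C⁻¹ * B * C * B = B * (C⁻¹ * B * C)) : C⁻¹ * B * C = B⁻¹ := by
  have h1 := tr_comm_conj B C
  have h2 := tr_conj B C
  generalize C⁻¹ * B * C = X at *
  have hx := det_eq X
  have hy := det_eq B
  rw [comm_iff] at hc
  obtain ⟨c1, c2, c3⟩ := hc
  generalize Fr (tr B) (tr C) (tr (B * C)) = F at *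
  simp only [tr, mul00, mul11, inv00, inv01, inv10, inv11] at h1 h2
  have hD : (X.1 0 0 - B.1 0 0) * (X.1 1 1 - B.1 1 1) - (X.1 0 1 - B.1 0 1) * (X.1 1 0 - B.1 1 0) ≠ 0 := by
    intro h
    have : F = 4 := by linear_combination -h - h1 + hx + hy
    omega
  have q00 : (X.1 0 0 - B.1 0 0) * (X.1 0 0 - B.1 1 1) + (X.1 0 1 - B.1 0 1) * (X.1 1 0 + B.1 1 0) = 0 := by
    linear_combination hy - hx + X.1 0 0 * h2 + c1
  have q01 : (X.1 0 0 - B.1 0 0) * (X.1 0 1 + B.1 0 1) + (X.1 0 1 - B.1 0 1) * (X.1 1 1 - B.1 0 0) = 0 := by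
    linear_combination X.1 0 1 * h2 - c2
  have q10 : (X.1 1 0 - B.1 1 0) * (X.1 0 0 - B.1 1 1) + (X.1 1 1 - B.1 1 1) * (X.1 1 0 + B.1 1 0) = 0 := by
    linear_combination X.1 1 0 * h2 + c3
  have q11 : (X.1 1 0 - B.1 1 0) * (X.1 0 1 + B.1 0 1) + (X.1 1 1 - B.1 1 1) * (X.1 1 1 - B.1 0 0) = 0 := by
    linear_combination hy - hx + X.1 1 1 * h2 - c1
  apply sl_ext
  · rw [inv00]
    have := mul_left_cancel₀ hD (show _ * (X.1 0 0 - B.1 1 1) = _ * 0 by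
      linear_combination (X.1 1 1 - B.1 1 1) * q00 - (X.1 0 1 - B.1 0 1) * q10)
    linarith
  · rw [inv01]
    have := mul_left_cancel₀ hD (show _ * (X.1 0 1 + B.1 0 1) = _ * 0 by
      linear_combination (X.1 1 1 - B.1 1 1) * q01 - (X.1 0 1 - B.1 0 1) * q11)
    linarith
  · rw [inv10]
    have := mul_left_cancel₀ hD (show _ * (X.1 1 0 + B.1 1 0) = _ * 0 by
      linear_combination (X.1 0 0 - B.1 0 0) * q10 - (X.1 1 0 - B.1 1 0) * q00)
    linarith
  · rw [inv11]
    have := mul_left_cancel₀ hD (show _ * (X.1 1 1 - B.1 0 0) = _ * 0 by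
      linear_combination (X.1 0 0 - B.1 0 0) * q11 - (X.1 1 0 - B.1 1 0) * q01)
    linarith

lemma tr_zero_of_sq_comm (B C : SL) (hne : B * C ≠ C * B) (h : (C * C) * B = B * (C * C)) :
    tr C = 0 := by
  by_contra hr
  apply hne
  symm
  rw [comm_iff] at h ⊢
  simp only [mul00, mul01, mul10, mul11] at h
  unfold tr at hr
  obtain ⟨h1, h2, h3⟩ := h
  refine ⟨?_, ?_, ?_⟩ <;> apply mul_left_cancel₀ hr
  · linear_combination h1
  · linear_combination h2
  · linear_combination h3

lemma dihedral {A B C : SL} (hA : ¬ Scal A) (hB : ¬ Scal B) (hAB : A * B = B * A)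
    (hBC : B * C ≠ C * B) (fu : 4 < Fr (tr A) (tr C) (tr (A * C)))
    (fv : 4 < Fr (tr B) (tr C) (tr (B * C)))
    (hc : A * (C⁻¹ * B * C) = C⁻¹ * B * C * A) : Good (pr A) (pr B) (pr C) := by
  have h1 : C⁻¹ * B * C = B⁻¹ := inv_of_conj B C fv (comm_trans hA hc hAB)
  have h2 : C⁻¹ * A * C = A⁻¹ := by
    apply inv_of_conj A C fu
    symm
    have hc2 : Commute (C⁻¹ * B * C) (C⁻¹ * A * C) := by
      show _ * _ = _ * _
      calc C⁻¹ * B * C * (C⁻¹ * A * C) = C⁻¹ * (B * A) * C := by group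
        _ = C⁻¹ * (A * B) * C := by rw [hAB]
        _ = _ := by group
    rw [h1] at hc2
    have hc3 := hc2.inv_left
    rw [inv_inv] at hc3
    exact comm_trans hB hAB.symm hc3.eq
  have hr : tr C = 0 := by
    apply tr_zero_of_sq_comm B C hBC
    have e : C⁻¹ * (C⁻¹ * B * C) * C = B := by
      rw [h1]
      calc C⁻¹ * B⁻¹ * C = (C⁻¹ * B * C)⁻¹ := by group
        _ = B := by rw [h1, inv_inv]
    calc C * C * B = C * C * (C⁻¹ * (C⁻¹ * B * C) * C) := by rw [e]
      _ = B * (C * C) := by group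
  have hcc := pr_sq hr
  have hcc' : (pr C)⁻¹ = pr C := by rw [inv_eq_iff_mul_eq_one, hcc]
  apply goodD
  · rw [← map_mul, hAB, map_mul]
  · exact hcc
  · have := congrArg pr h2
    rwa [map_mul, map_mul, map_inv, map_inv, hcc'] at this
  · have := congrArg pr h1
    rwa [map_mul, map_mul, map_inv, map_inv, hcc'] at this

/-- The words for `a` and `c` in terms of `S = a²c` and `U = ac`. -/
lemma words {G : Type*} [Group G] {a c : G} (hS : (a * a * c) * (a * a * c) = 1) :
    (a * a * c) * (a * c)⁻¹ = a ∧ (a * c) * (a * a * c) * (a * c) = c := by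
  refine ⟨by group, ?_⟩
  calc (a * c) * (a * a * c) * (a * c) = a⁻¹ * ((a * a * c) * (a * a * c)) * (a * c) := by group
    _ = c := by rw [hS]; group

lemma good_a48 {A B C : SL} (hu : Sg (tr (A * C))) (h2 : tr (A * A * C) = 0)
    (hAB : pr A = pr B) : Good (pr A) (pr B) (pr C) := by
  have hU := pr_cube hu
  have hS := pr_sq h2
  simp only [map_mul] at hU hS
  obtain ⟨e1, e2⟩ := words hS
  have := good48 hS hU
  rw [e1, e2] at this
  rw [← hAB]
  exact this

lemma good_a54 {A B C : SL} (hu : Sg (tr (A * C))) (h2 : tr (A * A * C) = 0)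
    (hAB : pr (A * A) = pr B) : Good (pr A) (pr B) (pr C) := by
  have hU := pr_cube hu
  have hS := pr_sq h2
  simp only [map_mul] at hU hS hAB
  obtain ⟨e1, e2⟩ := words hS
  have := good54 hS hU
  rw [e1, e2, hAB] at this
  exact this

lemma good_a36 {A B C : SL} (hr : Sg (tr C)) (hu : tr (A * C) = 0)
    (hAB : pr A = pr B) : Good (pr A) (pr B) (pr C) := by
  have hU := pr_cube hr
  have hS := pr_sq hu
  have := good36 hS hU
  rw [show pr (A * C) * (pr C)⁻¹ = pr A by rw [map_mul]; group] at this
  rw [← hAB]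
  exact this

/-- The numerical data, for matrices. -/
structure DatII (A B C : SL) : Prop where
  num : NumII (tr A) (tr B) (tr C) (tr (A * C)) (tr (B * C)) (tr (A * B * C)) (tr (A * B⁻¹))
    (tr (A * (C⁻¹ * B * C)))
  comm : A * B = B * A
  au : |tr (A * C)| ≤ 1
  av : |tr (B * C)| ≤ 1
  at' : |tr (A * B * C)| ≤ 1
  ax : |tr (A * (C⁻¹ * B * C))| ≤ 1

lemma DatII.symm {A B C : SL} (h : DatII A B C) : DatII B A C := by
  have e1 : tr (B * A * C) = tr (A * B * C) := by rw [h.comm]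
  have e2 : tr (B * A⁻¹) = tr (A * B⁻¹) := by
    rw [← tr_inv]; simp
  have e3 : tr (B * (C⁻¹ * A * C)) = tr (A * (C⁻¹ * B * C)) := by
    rw [tr_x', tr_x', e1, h.comm]; ring
  refine ⟨?_, h.comm.symm, h.av, h.au, by rw [e1]; exact h.at', by rw [e3]; exact h.ax⟩
  rw [e1, e2, e3]
  exact h.num.symm

lemma DatII.good {A B C : SL} (h : DatII A B C) :
    Good (pr A) (pr B) (pr C) ∨ Good (pr B) (pr A) (pr C) := by
  have key101 : ∀ A B C : SL, DatII A B C → chi A = 1 → chi B = 0 → chi C = 1 →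
      Good (pr A) (pr B) (pr C) := by
    intro A B C h ha hb hc
    have ht := tr_sg_of h.at' (by rw [chi_mul, chi_mul, ha, hb, hc]; decide)
    have hu := tr_sg_of h.au (by rw [chi_mul, ha, hc]; decide)
    have hv := tr_zero_of h.av (by rw [chi_mul, hb, hc]; decide)
    have hx := tr_zero_of h.ax (by rw [chi_mul, chi_conj, ha, hb]; decide)
    have hn := h.num
    rw [hv, hx] at hn
    obtain ⟨e1, e2, e3⟩ := ii_101 hn ht hu
    have u2 := hu.sq
    have t2 := ht.sq
    apply good_a54 hu
    · rw [tr_sq_mul, e1]; linear_combination (tr C) * u2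
    · have e5 : tr (A * C * B) = tr (A * B * C) := by
        rw [tr_mul_comm, ← mul_assoc, ← h.comm]
      have e6 : tr (A * C * (A * A)) = tr A * (tr A * tr (A * C) - tr C) - tr (A * C) := by
        rw [tr_mul_comm, show A * A * (A * C) = A * A * (A * C) from rfl, tr_sq_mul,
          ← mul_assoc, tr_sq_mul]
      refine eq_of_definite (A * C) (A * A) B (-(tr (A * C) * tr (A * B * C))) (sg_of ?_) h.au ?_ ?_ ?_
      · linear_combination (tr (A * B * C)) ^ 2 * u2 + t2
      · have := tr_sq_mul A 1
        rw [mul_one, mul_one, tr_one] at this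
        rw [this, e2, e1]
        linear_combination (tr C ^ 2 ) * u2 - (tr C ^ 2 - 2) * ((tr (A * B * C)) ^ 2 * u2 + t2)
      · rw [tr_sq_mul, e3, tr_inv, e2, e1]; ring
      · rw [e5, e6, e1]
        linear_combination (tr C) ^ 2 * tr (A * C) * u2 + tr (A * C) * t2
  rcases zmod2_cases (chi A) with ha | ha <;> rcases zmod2_cases (chi B) with hb | hb <;>
  rcases zmod2_cases (chi C) with hc | hc
  all_goals
    have ct : chi (A * B * C) = chi A + chi B + chi C := by rw [chi_mul, chi_mul]
    have cu : chi (A * C) = chi A + chi C := by rw [chi_mul]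
    have cv : chi (B * C) = chi B + chi C := by rw [chi_mul]
    have cx : chi (A * (C⁻¹ * B * C)) = chi A + chi B := by rw [chi_mul, chi_conj]
    rw [ha, hb, hc] at ct
    rw [ha, hc] at cu
    rw [hb, hc] at cv
    rw [ha, hb] at cx
    have hn := h.num
  · exact (ii_000 hn (tr_sg_of h.au cu) (tr_sg_of h.av cv) (tr_sg_of h.at' ct)
      (tr_sg_of h.ax cx)).elim
  · rw [tr_zero_of h.at' ct, tr_zero_of h.au cu, tr_zero_of h.av cv] at hn
    exact (ii_001 hn (tr_sg_of h.ax cx)).elim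
  · have hn := hn.symm
    rw [tr_zero_of h.at' ct, tr_zero_of h.av cv, tr_zero_of h.ax cx] at hn
    exact (ii_100 hn (tr_sg_of h.au cu)).elim
  · right
    exact key101 B A C h.symm hb ha hc
  · rw [tr_zero_of h.at' ct, tr_zero_of h.au cu, tr_zero_of h.ax cx] at hn
    exact (ii_100 hn (tr_sg_of h.av cv)).elim
  · left
    exact key101 A B C h ha hb hc
  · left
    have ht := tr_sg_of h.at' ct
    have hu := tr_zero_of h.au cu
    have hv := tr_zero_of h.av cv
    rw [hu, hv] at hn
    obtain ⟨e1, e2, e3⟩ := ii_110 hn ht (tr_sg_of h.ax cx)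
    have r2 := e3.sq
    have t2 := ht.sq
    apply good_a36 e3 hu
    refine eq_of_definite C A B (-(tr C * tr (A * B * C))) (sg_of ?_) ?_ ?_ ?_ ?_
    · linear_combination (tr (A * B * C)) ^ 2 * r2 + t2
    · rcases e3 with e | e <;> rw [e] <;> norm_num
    · rw [e2]; linear_combination (-tr A) * ((tr (A * B * C)) ^ 2 * r2 + t2)
    · rw [e1]; ring
    · rw [tr_mul_comm C A, hu, tr_mul_comm C B, hv]; ring
  · left
    have ht := tr_zero_of h.at' ct
    have hu := tr_sg_of h.au cu
    have hv := tr_sg_of h.av cv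
    rw [ht] at hn
    obtain ⟨e1, e2, e3⟩ := ii_111 hn hu hv (tr_sg_of h.ax cx)
    have u2 := hu.sq
    have v2 := hv.sq
    apply good_a48 hu
    · rw [tr_sq_mul, e3]; ring
    · refine eq_of_definite (B * C) A B (tr (A * C) * tr (B * C)) (sg_of ?_) h.av ?_ e1 ?_
      · linear_combination (tr (B * C)) ^ 2 * u2 + v2
      · rw [e2]; linear_combination (-tr A) * ((tr (B * C)) ^ 2 * u2 + v2)
      · have e5 : tr (B * C * A) = 0 := by rw [tr_mul_comm, ← mul_assoc, ht]
        have e6 : tr (B * C * B) = tr B * tr (B * C) - tr C := by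
          rw [tr_mul_comm, ← mul_assoc, tr_sq_mul]
        rw [e5, e6, e2, e3]
        linear_combination (-tr (A * C) ^ 2 * tr A * tr (B * C)) * v2

lemma caseII {O : Set (SL × SL × SL)} (hO : Closed O) {A B C : SL} (h : (A, B, C) ∈ O)
    (hA : ¬ Scal A) (hB : ¬ Scal B) (hAB : A * B = B * A) (hAC : A * C ≠ C * A)
    (hBC : B * C ≠ C * B) : ∃ X Y Z, (X, Y, Z) ∈ O ∧ Good (pr X) (pr Y) (pr Z) := by
  obtain ⟨au, fu⟩ := (hO.pair02 h).abs hAC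
  obtain ⟨av, fv⟩ := (hO.pair12 h).abs hBC
  by_cases hc : A * (C⁻¹ * B * C) = C⁻¹ * B * C * A
  · exact ⟨A, B, C, h, dihedral hA hB hAB hBC fu fv hc⟩
  have h1 := hO.m1 _ _ _ h
  obtain ⟨ax, fx⟩ := (hO.pair02 h1).abs hc
  have at' : |tr (A * B * C)| ≤ 1 := by
    rcases hO.ellT h with hT | ⟨hT, -, -⟩
    · exact hT
    · exfalso
      apply hAC
      have c1 : Commute A (A * B) := (Commute.refl A).mul_right hAB
      have c2 : Commute A (A * B * C) := hT.symm
      have c3 := c1.inv_right.mul_right c2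
      rwa [inv_mul_cancel_left] at c3
  have pz := hO.pair02 (hO.m1 _ _ _ h1)
  have py := hO.pair02 (hO.m0' _ _ _ h1)
  have ez := tr_x' A C (C⁻¹ * B * C)
  have ey := tr_y' A C (C⁻¹ * B * C)
  have g1 : A * C * (C⁻¹ * B * C) = A * B * C := by group
  have g2 : C * (C⁻¹ * B * C) = B * C := by group
  rw [g1, g2, tr_conj] at ez ey
  have hw := tr_mul_inv A B
  have hF := fr_eq A B hAB
  have hsum := tr_sum A B C
  have hACB : tr (A * C * B) = tr (A * B * C) := by
    rw [tr_mul_comm, ← mul_assoc, ← hAB]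
  have hx := tr_x' A B C
  rw [tr_conj] at fx
  have D : DatII A B C := by
    refine ⟨⟨?_, ?_, ?_, par_iff A B hA hB hAB, fx, fu, fv, ?_, ?_⟩, hAB, au, av, at', ax⟩
    · rw [hw]; rw [hACB] at hsum; linarith
    · rw [hw]; linarith
    · rw [hw, ← hF]; unfold Fr; ring
    · have e : tr A * tr C + tr B * tr (A * B * C) - tr (A * (C⁻¹ * B * C)) * tr (B * C)
          - tr (A * C) = tr (A * ((C⁻¹ * B * C)⁻¹ * C * (C⁻¹ * B * C))) := by rw [ez]; ring
      rw [e]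
      rcases pz with ⟨-, p⟩ | ⟨-, p, -⟩
      · right; rwa [tr_conj] at p
      · exact Or.inl p
    · have e : tr B * tr C + tr A * tr (A * B * C) - tr (A * (C⁻¹ * B * C)) * tr (A * C)
          - tr (B * C) = tr (A * C * A⁻¹ * (C⁻¹ * B * C)) := by rw [ey]; ring
      rw [e]
      rcases py with ⟨-, p⟩ | ⟨-, p, -⟩
      · right; rw [tr_conj', tr_conj] at p; unfold Fr at *; linarith
      · exact Or.inl p
  rcases D.good with g | g
  · exact ⟨A, B, C, h, g⟩
  · have h2 := hO.m0 _ _ _ h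
    rw [show B⁻¹ * A * B = A by rw [mul_assoc, hAB, inv_mul_cancel_left]] at h2
    exact ⟨B, A, C, h2, g⟩

end HB
/-! ## Part 10: assembly -/

namespace HB

/-- Irreducibility of a triple of matrices. -/
def Irr (A B C : SL) : Prop := ¬ Scal A ∧ ¬ Scal B ∧ ¬ Scal C ∧
  ¬ (A * B = B * A ∧ A * C = C * A ∧ B * C = C * B)

lemma scal_of_one_or {X : SL} (h : X = 1 ∨ X = -1) : Scal X := by
  rcases h with rfl | rfl <;> simp [Scal]

lemma scal_conj {X Y : SL} (h : Scal (Y⁻¹ * X * Y)) : Scal X := by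
  have e : X = Y * (Y⁻¹ * X * Y) * Y⁻¹ := by group
  apply scal_of_one_or
  rcases scal_one_or h with h | h
  · left; rw [e, h]; group
  · right; rw [e, h]; simp

lemma conj_eq {G : Type*} [Group G] {a b : G} (h : b * (b⁻¹ * a * b) = b⁻¹ * a * b * b) :
    b⁻¹ * a * b = a := by
  have h1 : a * b = b⁻¹ * a * b * b := by rw [← h]; group
  exact (mul_right_cancel h1).symm

lemma Irr.m0 {A B C : SL} (h : Irr A B C) : Irr B (B⁻¹ * A * B) C := by
  obtain ⟨h1, h2, h3, h4⟩ := h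
  refine ⟨h2, fun h => h1 (scal_conj h), h3, ?_⟩
  rintro ⟨c1, c2, c3⟩
  have e := conj_eq c1
  rw [e] at c1 c3
  exact h4 ⟨c1.symm, c3, c2⟩

lemma Irr.m1 {A B C : SL} (h : Irr A B C) : Irr A C (C⁻¹ * B * C) := by
  obtain ⟨h1, h2, h3, h4⟩ := h
  refine ⟨h1, h3, fun h => h2 (scal_conj h), ?_⟩
  rintro ⟨c1, c2, c3⟩
  have e := conj_eq c3
  rw [e] at c2 c3
  exact h4 ⟨c2, c1, c3.symm⟩

lemma irr_start (s : Fin 3 → BraidGroup 3) (hirr : ¬ IsReducible s) :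
    Irr (phi (s 0)) (phi (s 1)) (phi (s 2)) := by
  have key : ∀ i : Fin 3, ¬ ∀ j, Commute (s i) (s j) := by
    intro i h
    apply hirr
    refine ⟨{i}, ⟨i, rfl⟩, ⟨i + 1, ?_⟩, ?_⟩
    · revert i; intro i _; fin_cases i <;> simp
    · rintro _ rfl j _
      exact h j
  have key2 : ∀ i, ¬ Scal (phi (s i)) := fun i h =>
    key i (fun j => (commute_iff _ _).2 (scal_comm h _))
  refine ⟨key2 0, key2 1, key2 2, ?_⟩
  rintro ⟨c1, c2, c3⟩
  apply key 0
  intro j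
  fin_cases j
  · exact Commute.refl _
  · exact (commute_iff _ _).2 c1
  · exact (commute_iff _ _).2 c2

lemma exists_good (s : Fin 3 → BraidGroup 3) (hirr : ¬ IsReducible s)
    (hfin : (hurwitzOrbit s).Finite) :
    ∃ t ∈ hurwitzOrbit s, Good (pp (t 0)) (pp (t 1)) (pp (t 2)) := by
  have hO := closed_image phi s hfin
  have hI : ∀ t ∈ hurwitzOrbit s, Irr (phi (t 0)) (phi (t 1)) (phi (t 2)) := by
    refine orbit_pred s hfin (fun t => Irr (phi (t 0)) (phi (t 1)) (phi (t 2))) ?_ s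
      (self_mem_orbit s) (irr_start s hirr)
    intro i t h
    rcases fin2_cases i with rfl | rfl
    · simp only [h0_0, h0_1, h0_2, map_mul, map_inv]; exact h.m0
    · simp only [h1_0, h1_1, h1_2, map_mul, map_inv]; exact h.m1
  have hex : ∃ A B C, (A, B, C) ∈ (Set.image (fun t : Fin 3 → BraidGroup 3 =>
      (phi (t 0), phi (t 1), phi (t 2))) (hurwitzOrbit s)) ∧ A * B = B * A := by
    by_contra hno
    push Not at hno
    exact caseI hO hno _ _ _ ⟨s, self_mem_orbit s, rfl⟩
  obtain ⟨A, B, C, hm, hAB⟩ := hex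
  have hirr' : Irr A B C := by
    obtain ⟨t, ht, he⟩ := hm
    simp only [Prod.mk.injEq] at he
    obtain ⟨rfl, rfl, rfl⟩ := he
    exact hI t ht
  obtain ⟨h1, h2, h3, h4⟩ := hirr'
  obtain ⟨X, Y, Z, ⟨t, ht, he⟩, hg⟩ := caseII hO hm h1 h2 hAB
    (fun h => h4 ⟨hAB, h, comm_trans h1 hAB h⟩)
    (fun h => h4 ⟨hAB, comm_trans h2 hAB.symm h, h⟩)
  simp only [Prod.mk.injEq] at he
  obtain ⟨rfl, rfl, rfl⟩ := he
  exact ⟨t, ht, hg⟩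

lemma exp_perm (s : Fin 3 → BraidGroup 3) (hfin : (hurwitzOrbit s).Finite) :
    ∀ t ∈ hurwitzOrbit s, ∃ π : Equiv.Perm (Fin 3), ∀ k, expSumHom (t k) = expSumHom (s (π k)) := by
  have hconj : ∀ a b : BraidGroup 3, expSumHom (b⁻¹ * a * b) = expSumHom a := by
    intro a b
    rw [map_mul, map_mul, map_inv, mul_comm, mul_inv_cancel_left]
  refine orbit_pred s hfin (fun t => ∃ π : Equiv.Perm (Fin 3), ∀ k,
    expSumHom (t k) = expSumHom (s (π k))) ?_ s (self_mem_orbit s) ⟨1, fun k => rfl⟩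
  rintro i t ⟨π, hπ⟩
  rcases fin2_cases i with rfl | rfl
  · refine ⟨π * Equiv.swap 0 1, fun k => ?_⟩
    fin_cases k
    · show expSumHom (hEquiv i0 t 0) = expSumHom (s (π (Equiv.swap 0 1 0)))
      rw [h0_0, hπ, show Equiv.swap (0 : Fin 3) 1 0 = 1 by decide]
    · show expSumHom (hEquiv i0 t 1) = expSumHom (s (π (Equiv.swap 0 1 1)))
      rw [h0_1, hconj, hπ, show Equiv.swap (0 : Fin 3) 1 1 = 0 by decide]
    · show expSumHom (hEquiv i0 t 2) = expSumHom (s (π (Equiv.swap 0 1 2)))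
      rw [h0_2, hπ, show Equiv.swap (0 : Fin 3) 1 2 = 2 by decide]
  · refine ⟨π * Equiv.swap 1 2, fun k => ?_⟩
    fin_cases k
    · show expSumHom (hEquiv i1 t 0) = expSumHom (s (π (Equiv.swap 1 2 0)))
      rw [h1_0, hπ, show Equiv.swap (1 : Fin 3) 2 0 = 0 by decide]
    · show expSumHom (hEquiv i1 t 1) = expSumHom (s (π (Equiv.swap 1 2 1)))
      rw [h1_1, hπ, show Equiv.swap (1 : Fin 3) 2 1 = 2 by decide]
    · show expSumHom (hEquiv i1 t 2) = expSumHom (s (π (Equiv.swap 1 2 2)))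
      rw [h1_2, hconj, hπ, show Equiv.swap (1 : Fin 3) 2 2 = 1 by decide]

end HB

namespace HB

theorem main (s : Fin 3 → BraidGroup 3) (hirr : ¬ IsReducible s)
    (hfin : (hurwitzOrbit s).Finite) : (hurwitzOrbit s).ncard ≤ 162 := by
  classical
  obtain ⟨t', ht', L, hlen, hmem, hm0, hm1⟩ := exists_good s hirr hfin
  have hL : ∀ t ∈ hurwitzOrbit s, (pp (t 0), pp (t 1), pp (t 2)) ∈ L := by
    refine orbit_pred s hfin (fun t => (pp (t 0), pp (t 1), pp (t 2)) ∈ L) ?_ t' ht' hmem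
    intro i t h
    rcases fin2_cases i with rfl | rfl
    · simp only [h0_0, h0_1, h0_2, map_mul, map_inv]; exact hm0 _ _ _ h
    · simp only [h1_0, h1_1, h1_2, map_mul, map_inv]; exact hm1 _ _ _ h
  have hE := exp_perm s hfin
  let T : Finset ((PG × PG × PG) × (Fin 3 → Multiplicative ℤ)) :=
    L.toFinset ×ˢ (Finset.univ.image
      (fun π : Equiv.Perm (Fin 3) => fun k => expSumHom (s (π k))))
  have hT : T.card ≤ 162 := by
    have c1 : L.toFinset.card ≤ 27 := (List.toFinset_card_le L).trans hlen
    have c2 : (Finset.univ.image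
      (fun π : Equiv.Perm (Fin 3) => fun k => expSumHom (s (π k)))).card ≤ 6 := by
      refine Finset.card_image_le.trans ?_
      rw [Finset.card_univ, Fintype.card_perm]
      decide
    calc T.card = _ := Finset.card_product _ _
      _ ≤ 27 * 6 := Nat.mul_le_mul c1 c2
      _ = 162 := by norm_num
  have hle : (hurwitzOrbit s).ncard ≤ (T : Set ((PG × PG × PG) × (Fin 3 → Multiplicative ℤ))).ncard := by
    refine Set.ncard_le_ncard_of_injOn
      (fun t => ((pp (t 0), pp (t 1), pp (t 2)), fun k => expSumHom (t k))) ?_ ?_ T.finite_toSet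
    · intro t ht
      obtain ⟨π, hπ⟩ := hE t ht
      simp only [T, Finset.mem_coe, Finset.mem_product, List.mem_toFinset, Finset.mem_image,
        Finset.mem_univ, true_and]
      exact ⟨hL t ht, π, funext (fun k => (hπ k).symm)⟩
    · intro t _ t2 _ h
      simp only [Prod.mk.injEq] at h
      obtain ⟨⟨a0, a1, a2⟩, he⟩ := h
      funext k
      refine pp_inj ?_ (congrFun he k)
      fin_cases k
      · exact a0
      · exact a1
      · exact a2
  rw [Set.ncard_coe_finset] at hle
  exact hle.trans hT

end HB
/-- An irreducible degree `3`, length `3` braid system with finite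
Hurwitz orbit has orbit of size at most `162`. -/
theorem hurwitzOrbit_card_le_162 (s : Fin 3 → BraidGroup 3)
    (hirr : ¬ IsReducible s)
    (hfin : (hurwitzOrbit s).Finite) :
    (hurwitzOrbit s).ncard ≤ 162 := by
  exact HB.main s hirr hfin
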